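/- arXiv:2002.09526 — 6 statements merged into one kernel-verified Lean document; each statement's English description precedes it below -/
import Mathlib

section
/- Let (Ω, μ) be a probability space, let d ≥ 1, and let P : Ω → ℝ^{d×d} be a measurable map such that, for almost every ω, P(ω) is a symmetric idempotent matrix (P(ω)ᵀ = P(ω) and P(ω)² = P(ω)), and suppose that the entrywise expectation satisfies E[P] = (τ/d)·I_d for some real τ with 0 < τ ≤ d. Then for every h ∈ ℝ^d, E[‖P(ω)h‖³] ≤ (τ/d)·‖h‖³. -/
open Matrix MeasureTheory

/-- Reinterpret a plain vector as an element of Euclidean space. -/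
noncomputable def toE {n : ℕ} (v : Fin n → ℝ) : EuclideanSpace ℝ (Fin n) := WithLp.toLp 2 v

/-!
An orthogonal projection `P` satisfies `‖P h‖² = ⟪P h, h⟫`. For `x = P h`, or any `x` with
`‖x‖² ≤ re ⟪x, h⟫`, Cauchy–Schwarz gives `‖x‖ ≤ ‖h‖`, hence
`‖x‖ ^ p ≤ ‖h‖ ^ (p - 2) * re ⟪x, h⟫` for every `p ≥ 2`. The right-hand side is real-linear in `x`,
so after integration it depends only on the mean of `x`.
-/

open RCLike WithLp
open scoped InnerProductSpace

section FirmlyNonexpansive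

variable {𝕜 E : Type*} [RCLike 𝕜] [NormedAddCommGroup E] [InnerProductSpace 𝕜 E]

lemma norm_le_of_norm_sq_le_re_inner {x h : E} (hx : ‖x‖ ^ 2 ≤ re ⟪x, h⟫_𝕜) : ‖x‖ ≤ ‖h‖ := by
  have cauchy_schwarz : re ⟪x, h⟫_𝕜 ≤ ‖x‖ * ‖h‖ := re_inner_le_norm x h
  by_contra! hlt
  nlinarith [norm_nonneg h]

lemma norm_rpow_le_mul_re_inner {x h : E} {p : ℝ} (hp : 2 ≤ p)
    (hx : ‖x‖ ^ 2 ≤ re ⟪x, h⟫_𝕜) : ‖x‖ ^ p ≤ ‖h‖ ^ (p - 2) * re ⟪x, h⟫_𝕜 := by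
  have hp' : 0 ≤ p - 2 := sub_nonneg.2 hp
  calc ‖x‖ ^ p = ‖x‖ ^ (p - 2) * ‖x‖ ^ 2 := by
        rw [← Real.rpow_two, ← Real.rpow_add_of_nonneg (norm_nonneg x) hp' zero_le_two,
          sub_add_cancel]
    _ ≤ ‖h‖ ^ (p - 2) * re ⟪x, h⟫_𝕜 := by
        gcongr
        exact norm_le_of_norm_sq_le_re_inner hx

lemma norm_sq_apply_of_isSymmetricProjection {T : E →ₗ[𝕜] E} (hT : T.IsSymmetricProjection)
    (x : E) : ‖T x‖ ^ 2 = re ⟪T x, x⟫_𝕜 := by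
  rw [← inner_self_eq_norm_sq (𝕜 := 𝕜), ← hT.isSymmetric, ← Module.End.mul_apply,
    hT.isIdempotentElem.eq]

variable {Ω : Type*} [MeasurableSpace Ω] {μ : Measure Ω} [NormedSpace ℝ E] [CompleteSpace E]
  {X : Ω → E} {h : E} {p : ℝ}

lemma integral_norm_rpow_le_mul_re_inner (hp : 2 ≤ p) (hint : Integrable X μ)
    (hX : ∀ᵐ ω ∂μ, ‖X ω‖ ^ 2 ≤ re ⟪X ω, h⟫_𝕜) :
    ∫ ω, ‖X ω‖ ^ p ∂μ ≤ ‖h‖ ^ (p - 2) * re ⟪∫ ω, X ω ∂μ, h⟫_𝕜 := by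
  have hre : ∫ ω, re ⟪X ω, h⟫_𝕜 ∂μ = re ⟪∫ ω, X ω ∂μ, h⟫_𝕜 := by
    simp only [inner_re_symm _ h]
    rw [integral_re (hint.const_inner h), integral_inner hint]
  calc ∫ ω, ‖X ω‖ ^ p ∂μ ≤ ∫ ω, ‖h‖ ^ (p - 2) * re ⟪X ω, h⟫_𝕜 ∂μ :=
        integral_mono_of_nonneg (.of_forall fun ω ↦ by positivity)
          ((hint.inner_const h).re.const_mul _)
          (hX.mono fun ω hω ↦ norm_rpow_le_mul_re_inner hp hω)
    _ = ‖h‖ ^ (p - 2) * re ⟪∫ ω, X ω ∂μ, h⟫_𝕜 := by rw [integral_const_mul, hre]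

theorem expected_cubed_norm_projection_general {c : ℝ} (hp : 2 ≤ p) (hint : Integrable X μ)
    (hX : ∀ᵐ ω ∂μ, ‖X ω‖ ^ 2 ≤ re ⟪X ω, h⟫_𝕜) (hE : ∫ ω, X ω ∂μ = (c : 𝕜) • h) :
    ∫ ω, ‖X ω‖ ^ p ∂μ ≤ c * ‖h‖ ^ p := by
  have hp' : 0 ≤ p - 2 := sub_nonneg.2 hp
  calc ∫ ω, ‖X ω‖ ^ p ∂μ ≤ ‖h‖ ^ (p - 2) * re ⟪(c : 𝕜) • h, h⟫_𝕜 :=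
        hE ▸ integral_norm_rpow_le_mul_re_inner hp hint hX
    _ = c * (‖h‖ ^ (p - 2) * ‖h‖ ^ (2 : ℝ)) := by
        rw [inner_smul_left, conj_ofReal, re_ofReal_mul, inner_self_eq_norm_sq, Real.rpow_two]
        ring
    _ = c * ‖h‖ ^ p := by
        rw [← Real.rpow_add_of_nonneg (norm_nonneg h) hp' zero_le_two, sub_add_cancel]

end FirmlyNonexpansive

section Matrix

variable {𝕜 m n : Type*} [RCLike 𝕜] [Fintype m] [Fintype n]

lemma norm_sq_toLp_mulVec_of_isStarProjection {A : Matrix n n 𝕜} (hA : IsStarProjection A)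
    (v : n → 𝕜) : ‖toLp 2 (A *ᵥ v)‖ ^ 2 = re ⟪toLp 2 (A *ᵥ v), toLp 2 v⟫_𝕜 := by
  classical
  exact norm_sq_apply_of_isSymmetricProjection
    (ContinuousLinearMap.IsStarProjection.isSymmetricProjection
      (hA.map (toEuclideanCLM (n := n) (𝕜 := 𝕜)))) (toLp 2 v)

lemma norm_entry_le_one_of_isStarProjection {A : Matrix n n 𝕜} (hA : IsStarProjection A)
    (i j : n) : ‖A i j‖ ≤ 1 := by
  classical
  calc ‖A i j‖ = ‖toLp 2 (A *ᵥ Pi.single j 1) i‖ := by simp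
    _ ≤ ‖toLp 2 (A *ᵥ Pi.single j 1)‖ := PiLp.norm_apply_le _ i
    _ ≤ ‖toLp 2 (Pi.single j (1 : 𝕜))‖ :=
        norm_le_of_norm_sq_le_re_inner (norm_sq_toLp_mulVec_of_isStarProjection hA _).le
    _ = 1 := by simp

variable {Ω : Type*} [MeasurableSpace Ω] {μ : Measure Ω}

lemma integrable_entry_of_isStarProjection [IsFiniteMeasure μ] {P : Ω → Matrix n n 𝕜} {i j : n}
    (hmeas : AEStronglyMeasurable (fun ω ↦ P ω i j) μ) (hproj : ∀ᵐ ω ∂μ, IsStarProjection (P ω)) :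
    Integrable (fun ω ↦ P ω i j) μ :=
  .of_bound hmeas 1 (hproj.mono fun _ hω ↦ norm_entry_le_one_of_isStarProjection hω i j)

variable {P : Ω → Matrix m n 𝕜}

lemma integrable_toLp_mulVec (hP : ∀ i j, Integrable (fun ω ↦ P ω i j) μ) (v : n → 𝕜) :
    Integrable (fun ω ↦ toLp 2 (P ω *ᵥ v)) μ :=
  integrable_piLp_iff.2 fun i ↦
    integrable_finsetSum _ fun j _ ↦ (hP i j).mul_const (v j)

lemma integral_toLp_mulVec (hP : ∀ i j, Integrable (fun ω ↦ P ω i j) μ) (v : n → 𝕜) :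
    ∫ ω, toLp 2 (P ω *ᵥ v) ∂μ = toLp 2 (of (fun i j ↦ ∫ ω, P ω i j ∂μ) *ᵥ v) := by
  ext i
  rw [eval_integral_piLp (integrable_piLp_iff.1 (integrable_toLp_mulVec hP v))]
  simp only [mulVec, dotProduct, of_apply]
  rw [integral_finsetSum _ fun j _ ↦ (hP i j).mul_const (v j)]
  simp only [integral_mul_const]

lemma integral_toLp_mulVec_eq_smul [DecidableEq n] {Q : Ω → Matrix n n 𝕜} {c : 𝕜}
    (hQ : ∀ i j, Integrable (fun ω ↦ Q ω i j) μ)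
    (hE : ∀ i j, ∫ ω, Q ω i j ∂μ = c * (1 : Matrix n n 𝕜) i j) (v : n → 𝕜) :
    ∫ ω, toLp 2 (Q ω *ᵥ v) ∂μ = c • toLp 2 v := by
  have hmean : of (fun i j ↦ ∫ ω, Q ω i j ∂μ) = c • 1 := Matrix.ext hE
  rw [integral_toLp_mulVec hQ, hmean, smul_mulVec, one_mulVec, toLp_smul]

end Matrix

/-- If `P : Ω → ℝ^{d×d}` is a.e. a symmetric idempotent (an orthogonal
projection) with entrywise expectation `E[P] = (τ/d)·I`, then for every `h ∈ ℝ^d`,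
`E[‖P(ω)h‖³] ≤ (τ/d)·‖h‖³`. -/
theorem expected_cubed_norm_projection
    {Ω : Type*} [MeasurableSpace Ω] (μ : MeasureTheory.Measure Ω) [IsProbabilityMeasure μ]
    (d : ℕ) (hd : 1 ≤ d) (P : Ω → Matrix (Fin d) (Fin d) ℝ)
    (hmeas : ∀ i j, Measurable fun ω => P ω i j)
    (hproj : ∀ᵐ ω ∂μ, (P ω)ᵀ = P ω ∧ P ω * P ω = P ω)
    (τ : ℝ) (hτ : 0 < τ) (hτd : τ ≤ (d : ℝ))
    (hE : ∀ i j, ∫ ω, P ω i j ∂μ = (τ / d) * (1 : Matrix (Fin d) (Fin d) ℝ) i j)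
    (hint : ∀ h : Fin d → ℝ, Integrable (fun ω => ‖toE ((P ω).mulVec h)‖ ^ 3) μ) :
    ∀ h : Fin d → ℝ, ∫ ω, ‖toE ((P ω).mulVec h)‖ ^ 3 ∂μ ≤ (τ / d) * ‖toE h‖ ^ 3 := by
  intro h
  have hstar : ∀ᵐ ω ∂μ, IsStarProjection (P ω) := hproj.mono fun ω hω ↦ ⟨hω.2, hω.1⟩
  have hentry i j : Integrable (fun ω ↦ P ω i j) μ :=
    integrable_entry_of_isStarProjection (hmeas i j).aestronglyMeasurable hstar
  exact_mod_cast expected_cubed_norm_projection_general (𝕜 := ℝ) (p := (3 : ℕ)) (by norm_num)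
    (integrable_toLp_mulVec hentry h)
    (hstar.mono fun ω hω ↦ (norm_sq_toLp_mulVec_of_isStarProjection hω h).le)
    (integral_toLp_mulVec_eq_smul hentry hE h)
end

section
/- Let (Ω, μ) be a probability space, let d ≥ 1, and let P : Ω → ℝ^{d×d} be a measurable map such that, for almost every ω, P(ω) is a symmetric idempotent matrix, and suppose E[P] = (τ/d)·I_d for some real τ with 0 < τ ≤ d. Let A ∈ ℝ^{d×d} be symmetric with 0 ⪯ A ⪯ L·I_d for some L ≥ 0. Then, in the Loewner (positive semidefinite) order, E[P(ω) A P(ω)] ⪯ (τ²/d²)·A + (τ(d−τ)/d²)·L·I_d. -/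
/-!
For `c ≥ 0` the expectation of `(X - E[X])⋆ c (X - E[X])` is nonnegative, which is the Jensen-type
inequality `E[X]⋆ c E[X] ≤ E[X⋆ c X]`. A projection satisfies `P (L - A) P = L P - P A P`, so
taking `X = P` and `c = L - A` turns this lower bound into the upper bound
`E[P A P] ≤ M A M + L (M - M²)` with `M = E[P]`; the theorem is the case of a scalar matrix `M`.
-/

open Matrix MeasureTheory

section IntegralStar

variable {Ω E : Type*} [MeasurableSpace Ω] {μ : Measure Ω} [NormedAddCommGroup E]
  [NormedSpace ℝ E] [StarAddMonoid E] [StarModule ℝ E] [ContinuousStar E] {X : Ω → E}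

theorem integrable_star (hX : Integrable X μ) : Integrable (fun ω ↦ star (X ω)) μ :=
  (starL' ℝ : E ≃L[ℝ] E).toContinuousLinearMap.integrable_comp hX

theorem integral_star (X : Ω → E) : ∫ ω, star (X ω) ∂μ = star (∫ ω, X ω ∂μ) :=
  (starL' ℝ : E ≃L[ℝ] E).integral_comp_comm X

theorem isSelfAdjoint_integral (hX : ∀ᵐ ω ∂μ, IsSelfAdjoint (X ω)) :
    IsSelfAdjoint (∫ ω, X ω ∂μ) :=
  (integral_star X).symm.trans <| integral_congr_ae <| hX.mono fun _ h ↦ h.star_eq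

end IntegralStar

section StarProjection

variable {Ω E : Type*} [MeasurableSpace Ω] {μ : Measure Ω} [IsFiniteMeasure μ] {p : Ω → E}

theorem integrable_of_ae_isStarProjection [NonUnitalNormedRing E] [StarRing E] [CStarRing E]
    (hp_meas : AEStronglyMeasurable p μ) (hp : ∀ᵐ ω ∂μ, IsStarProjection (p ω)) :
    Integrable p μ :=
  .of_bound hp_meas 1 <| hp.mono fun ω ↦ IsStarProjection.norm_le (p ω)

theorem integrable_conjugate_of_ae_isStarProjection [NormedRing E] [StarRing E] [CStarRing E]
    (hp_meas : AEStronglyMeasurable p μ) (hp : ∀ᵐ ω ∂μ, IsStarProjection (p ω)) (a : E) :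
    Integrable (fun ω ↦ p ω * a * p ω) μ :=
  ((integrable_of_ae_isStarProjection hp_meas hp).mul_const a).mul_bdd hp_meas <|
    hp.mono fun ω ↦ IsStarProjection.norm_le (p ω)

end StarProjection

section StarAlgebra

variable {Ω E : Type*} [MeasurableSpace Ω] {μ : Measure Ω} [IsProbabilityMeasure μ]
  [NormedRing E] [StarRing E] [NormedAlgebra ℝ E] [StarModule ℝ E] [CompleteSpace E]

theorem integral_star_sub_integral_mul_mul_sub_integral [ContinuousStar E] {X : Ω → E} {c : E}
    (hX : Integrable X μ) (hXcX : Integrable (fun ω ↦ star (X ω) * c * X ω) μ) :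
    ∫ ω, star (X ω - ∫ ω', X ω' ∂μ) * c * (X ω - ∫ ω', X ω' ∂μ) ∂μ =
      ∫ ω, star (X ω) * c * X ω ∂μ - star (∫ ω, X ω ∂μ) * c * ∫ ω, X ω ∂μ := by
  set m := ∫ ω, X ω ∂μ
  have h_centered : Integrable (fun ω ↦ X ω - m) μ := hX.sub (integrable_const m)
  have h_left : Integrable (fun ω ↦ star (X ω) * (c * m)) μ := (integrable_star hX).mul_const _
  have h_sub : Integrable (fun ω ↦ star (X ω) * c * X ω - star (X ω) * (c * m)) μ :=
    hXcX.sub h_left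
  have integral_centered : ∫ ω, (X ω - m) ∂μ = 0 := by
    rw [integral_sub hX (integrable_const m), integral_const, probReal_univ, one_smul, sub_self]
  calc ∫ ω, star (X ω - m) * c * (X ω - m) ∂μ
      = ∫ ω, (star (X ω) * c * X ω - star (X ω) * (c * m) - star m * c * (X ω - m)) ∂μ := by
        congr with ω
        rw [star_sub]
        noncomm_ring
    _ = ∫ ω, star (X ω) * c * X ω ∂μ - star m * c * m := by
        rw [integral_sub h_sub (h_centered.const_mul _), integral_sub hXcX h_left,
          integral_mul_const_of_integrable (integrable_star hX), integral_star,
          integral_const_mul_of_integrable h_centered, integral_centered, mul_zero, sub_zero,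
          mul_assoc]

variable [PartialOrder E] [StarOrderedRing E] [ClosedIciTopology E]

theorem star_integral_mul_mul_integral_le [ContinuousStar E] {X : Ω → E} {c : E} (hc : 0 ≤ c)
    (hX : Integrable X μ) (hXcX : Integrable (fun ω ↦ star (X ω) * c * X ω) μ) :
    star (∫ ω, X ω ∂μ) * c * ∫ ω, X ω ∂μ ≤ ∫ ω, star (X ω) * c * X ω ∂μ := by
  rw [← sub_nonneg, ← integral_star_sub_integral_mul_mul_sub_integral hX hXcX]
  exact integral_nonneg fun ω ↦ star_left_conjugate_nonneg hc _

theorem integral_conjugate_le_of_ae_isStarProjection [CStarRing E] {p : Ω → E} {a : E} {L : ℝ}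
    (hp_meas : AEStronglyMeasurable p μ) (hp : ∀ᵐ ω ∂μ, IsStarProjection (p ω))
    (ha : a ≤ L • 1) :
    ∫ ω, p ω * a * p ω ∂μ ≤ (∫ ω, p ω ∂μ) * a * (∫ ω, p ω ∂μ)
      + L • (∫ ω, p ω ∂μ - (∫ ω, p ω ∂μ) * ∫ ω, p ω ∂μ) := by
  set m := ∫ ω, p ω ∂μ
  have hm : star m = m := isSelfAdjoint_integral <| hp.mono fun _ h ↦ h.isSelfAdjoint
  have hp_int := integrable_of_ae_isStarProjection hp_meas hp
  have hLp : Integrable (fun ω ↦ L • p ω) μ := hp_int.smul L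
  have hpap := integrable_conjugate_of_ae_isStarProjection hp_meas hp a
  have conjugate_gap : (fun ω ↦ star (p ω) * (L • 1 - a) * p ω) =ᵐ[μ]
      fun ω ↦ L • p ω - p ω * a * p ω := by
    filter_upwards [hp] with ω hω
    rw [hω.isSelfAdjoint.star_eq, mul_sub, sub_mul, mul_smul_one, smul_mul_assoc,
      hω.isIdempotentElem.eq]
  have jensen : m * (L • 1 - a) * m ≤ L • m - ∫ ω, p ω * a * p ω ∂μ :=
    calc m * (L • 1 - a) * m
        = star m * (L • 1 - a) * m := by rw [hm]
      _ ≤ ∫ ω, star (p ω) * (L • 1 - a) * p ω ∂μ :=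
        star_integral_mul_mul_integral_le (sub_nonneg.2 ha) hp_int
          ((hLp.sub hpap).congr conjugate_gap.symm)
      _ = L • m - ∫ ω, p ω * a * p ω ∂μ := by
        rw [integral_congr_ae conjugate_gap, integral_sub hLp hpap, integral_smul]
  calc ∫ ω, p ω * a * p ω ∂μ
      ≤ L • m - m * (L • 1 - a) * m := le_sub_comm.1 jensen
    _ = m * a * m + L • (m - m * m) := by
      rw [mul_sub, sub_mul, mul_smul_one, smul_mul_assoc, smul_sub]
      abel

end StarAlgebra

section MatrixTopology

theorem isClosed_setOf_posSemidef {n R : Type*} [Ring R] [StarRing R] [PartialOrder R]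
    [TopologicalSpace R] [IsTopologicalSemiring R] [ContinuousStar R] [OrderClosedTopology R] :
    IsClosed {A : Matrix n n R | A.PosSemidef} := by
  have hermitian : IsClosed {A : Matrix n n R | A.IsHermitian} :=
    isClosed_eq continuous_id.matrix_conjTranspose continuous_id
  have quadratic (x : n →₀ R) :
      IsClosed {A : Matrix n n R | 0 ≤ x.sum fun i xi ↦ x.sum fun j xj ↦ star xi * A i j * xj} := by
    simp only [Finsupp.sum]
    exact isClosed_le continuous_const (by fun_prop)
  simpa only [PosSemidef, Set.ofPred_and, Set.ofPred_forall] using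
    hermitian.inter (isClosed_iInter quadratic)

open scoped ComplexOrder MatrixOrder in
instance instClosedIciTopologyMatrix {n 𝕜 : Type*} [RCLike 𝕜] :
    ClosedIciTopology (Matrix n n 𝕜) where
  isClosed_Ici _ := isClosed_setOf_posSemidef.preimage (continuous_id.sub continuous_const)

theorem aestronglyMeasurable_matrix {Ω m n R : Type*} [MeasurableSpace Ω] {μ : Measure Ω}
    [Finite m] [Finite n] [AddCommMonoid R] [TopologicalSpace R] [ContinuousAdd R]
    {X : Ω → Matrix m n R} (hX : ∀ i j, AEStronglyMeasurable (fun ω ↦ X ω i j) μ) :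
    AEStronglyMeasurable X μ := by
  classical
  have := Fintype.ofFinite m
  have := Fintype.ofFinite n
  rw [funext fun ω ↦ matrix_eq_sum_single (X ω)]
  refine Finset.aestronglyMeasurable_fun_sum _ fun i _ ↦
    Finset.aestronglyMeasurable_fun_sum _ fun j _ ↦ ?_
  have single_continuous : Continuous (single i j : R → Matrix m n R) :=
    continuous_matrix fun k l ↦ by
      simp only [single_apply]
      split_ifs <;> fun_prop
  exact single_continuous.comp_aestronglyMeasurable (hX i j)

end MatrixTopology

section EntrywiseIntegral

open scoped Matrix.Norms.L2Operator

variable {Ω 𝕜 n : Type*} [MeasurableSpace Ω] {μ : Measure Ω} [RCLike 𝕜] [Fintype n]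
  [DecidableEq n]

-- The `L2Operator` scope provides only the `𝕜`-algebra structure; Bochner integrals need
-- the real one.
noncomputable local instance : NormedAlgebra ℝ (Matrix n n 𝕜) where
  norm_smul_le r A := by
    rw [RCLike.real_smul_eq_coe_smul (K := 𝕜), norm_smul, RCLike.norm_ofReal, Real.norm_eq_abs]

theorem integral_matrix_apply {X : Ω → Matrix n n 𝕜} (hX : Integrable X μ) (i j : n) :
    (∫ ω, X ω ∂μ) i j = ∫ ω, X ω i j ∂μ :=
  ((entryLinearMap ℝ 𝕜 i j).toContinuousLinearMap.integral_comp_comm hX).symm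

open scoped ComplexOrder MatrixOrder in
theorem expected_projected_matrix_loewner_bound_general [IsProbabilityMeasure μ]
    {P : Ω → Matrix n n 𝕜} {M A : Matrix n n 𝕜} {L : ℝ}
    (hmeas : ∀ i j, AEStronglyMeasurable (fun ω ↦ P ω i j) μ)
    (hproj : ∀ᵐ ω ∂μ, IsStarProjection (P ω))
    (hM : ∀ i j, ∫ ω, P ω i j ∂μ = M i j)
    (hAL : (L • (1 : Matrix n n 𝕜) - A).PosSemidef) :
    (M * A * M + L • (M - M * M) - of fun i j ↦ ∫ ω, (P ω * A * P ω) i j ∂μ).PosSemidef := by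
  have P_meas := aestronglyMeasurable_matrix hmeas
  have integral_P : ∫ ω, P ω ∂μ = M := by
    ext i j
    rw [integral_matrix_apply (integrable_of_ae_isStarProjection P_meas hproj), hM]
  have integral_PAP : ∫ ω, P ω * A * P ω ∂μ = of fun i j ↦ ∫ ω, (P ω * A * P ω) i j ∂μ := by
    ext i j
    exact integral_matrix_apply (integrable_conjugate_of_ae_isStarProjection P_meas hproj A) i j
  rw [← Matrix.le_iff, ← integral_PAP, ← integral_P]
  exact integral_conjugate_le_of_ae_isStarProjection P_meas hproj (Matrix.le_iff.2 hAL)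

end EntrywiseIntegral

/-- If `P : Ω → ℝ^{d×d}` is a.e. a symmetric idempotent with entrywise
expectation `E[P] = (τ/d)·I`, and `A` is symmetric with `0 ⪯ A ⪯ L·I`, then in the Loewner
order `E[P A P] ⪯ (τ²/d²)·A + (τ(d−τ)/d²)·L·I`. -/
theorem expected_projected_matrix_loewner_bound
    {Ω : Type*} [MeasurableSpace Ω] (μ : MeasureTheory.Measure Ω) [IsProbabilityMeasure μ]
    (d : ℕ) (hd : 1 ≤ d) (P : Ω → Matrix (Fin d) (Fin d) ℝ)
    (hmeas : ∀ i j, Measurable fun ω => P ω i j)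
    (hproj : ∀ᵐ ω ∂μ, (P ω)ᵀ = P ω ∧ P ω * P ω = P ω)
    (τ : ℝ) (hτ : 0 < τ) (hτd : τ ≤ (d : ℝ))
    (hE : ∀ i j, ∫ ω, P ω i j ∂μ = (τ / d) * (1 : Matrix (Fin d) (Fin d) ℝ) i j)
    (A : Matrix (Fin d) (Fin d) ℝ) (L : ℝ) (hL : 0 ≤ L)
    (hA : A.PosSemidef) (hAL : (L • (1 : Matrix (Fin d) (Fin d) ℝ) - A).PosSemidef)
    (hint : ∀ i j, Integrable (fun ω => (P ω * A * P ω) i j) μ) :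
    ((τ ^ 2 / (d : ℝ) ^ 2) • A
        + (τ * ((d : ℝ) - τ) / (d : ℝ) ^ 2 * L) • (1 : Matrix (Fin d) (Fin d) ℝ)
        - Matrix.of fun i j => ∫ ω, (P ω * A * P ω) i j ∂μ).PosSemidef := by
  have isotropic : (τ ^ 2 / (d : ℝ) ^ 2) • A + (τ * ((d : ℝ) - τ) / (d : ℝ) ^ 2 * L) • 1 =
      (τ / d) • 1 * A * (τ / d) • 1 + L • ((τ / d) • 1 - (τ / d) • 1 * (τ / d) • 1) := by
    have hd₀ : (d : ℝ) ≠ 0 := Nat.cast_ne_zero.2 (Nat.one_le_iff_ne_zero.1 hd)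
    rw [smul_one_mul, mul_smul_one, smul_one_mul]
    match_scalars <;> field_simp
  rw [isotropic]
  exact expected_projected_matrix_loewner_bound_general
    (fun i j ↦ (hmeas i j).aestronglyMeasurable)
    (hproj.mono fun _ ⟨hsymm, hidem⟩ ↦ ⟨hidem, hsymm⟩) hE hAL
end

section
/- Let f : ℝ^d → ℝ be convex and twice continuously differentiable with L-Lipschitz continuous gradient (∇²f(x) ⪯ L·I_d for all x) and M-Lipschitz continuous Hessian (‖∇²f(x) − ∇²f(y)‖_op ≤ M‖x − y‖ for all x, y). Let (Ω, μ) be a probability space, 1 ≤ τ ≤ d integers, and S : Ω → ℝ^{d×τ} a measurable map such that, for almost every ω, S(ω) has full column rank and E[P^{S(ω)}] = (τ/d)·I_d, where P^S := S(SᵀS)⁻¹Sᵀ. Fix x ∈ ℝ^d and let h : Ω → ℝ^τ be such that, for almost every ω, h(ω) is a global minimizer over ℝ^τ of the cubic model T_{S(ω)}(x, h) := ⟨S(ω)ᵀ∇f(x), h⟩ + (1/2)⟨S(ω)ᵀ∇²f(x)S(ω) h, h⟩ + (M/6)‖S(ω)h‖³, and set x⁺(ω) := x + S(ω)h(ω).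 Then for every y ∈ ℝ^d: E[f(x⁺)] ≤ (1 − τ/d)·f(x) + (τ/d)·f(y) + (τ/d)·( ((d−τ)/d)·(L/2)·‖y − x‖² + (M/3)·‖y − x‖³ ). -/
/-!
The cubic term of the model dominates the Taylor error of `f`, so by minimality `f (x + s) - f x` is
at most the cubic model at `P u`, where `u = y - x` and `P` is the random projection onto the
sketched subspace. The expectation of that is controlled by `E[P] = p I` alone: as
`‖P u‖² = ⟪u, P u⟫`, one has `E‖P u‖² = p ‖u‖²` and `E‖P u‖³ ≤ p ‖u‖³`, and Jensen's inequality for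
the convex quadratic form `L ‖v‖² - ⟪∇²f(x) v, v⟫` gives
`E⟪∇²f(x) P u, P u⟫ ≤ p² ⟪∇²f(x) u, u⟫ + p (1 - p) L ‖u‖²`. What remains is the quadratic model at
the deterministic point `p u`. Up to a second cubic Taylor error it is `f (x + p u) - f x`, and
convexity bounds `f (x + p u)` by `(1 - p) f x + p f y`. The two cubic terms contribute `M / 6`
each, which is where `M / 3` comes from.
-/

open Matrix MeasureTheory

/-- Reinterpret an element of Euclidean space as a plain vector. -/
noncomputable def fromE {n : ℕ} (v : EuclideanSpace ℝ (Fin n)) : Fin n → ℝ := v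

open Set
open scoped RealInnerProductSpace

section Taylor

variable {E F : Type*} [NormedAddCommGroup F] [NormedSpace ℝ F]

theorem norm_sub_le_of_norm_deriv_le_pow {ψ ψ' : ℝ → F} {C : ℝ} {n : ℕ}
    (hψ : ∀ t, HasDerivAt ψ (ψ' t) t) (hC : ∀ t, 0 ≤ t → ‖ψ' t‖ ≤ C * t ^ n)
    {t : ℝ} (ht : 0 ≤ t) :
    ‖ψ t - ψ 0‖ ≤ C / (n + 1) * t ^ (n + 1) := by
  have hB : ∀ s, HasDerivAt (fun s : ℝ => C / (n + 1) * s ^ (n + 1)) (C * s ^ n) s := fun s =>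
    ((hasDerivAt_pow (n + 1) s).const_mul (C / (n + 1))).congr_deriv (by
      push_cast [Nat.add_sub_cancel]
      field_simp)
  exact image_norm_le_of_norm_deriv_right_le_deriv_boundary
    (fun s _ => ((hψ s).sub_const (ψ 0)).continuousAt.continuousWithinAt)
    (fun s _ => ((hψ s).sub_const (ψ 0)).hasDerivWithinAt) (by simp) hB
    (fun s hs => hC s hs.1) (right_mem_Icc.2 ht)

theorem hasDerivAt_add_smul [NormedAddCommGroup E] [NormedSpace ℝ E] (x v : E) (t : ℝ) :
    HasDerivAt (fun t : ℝ => x + t • v) v t := by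
  simpa using ((hasDerivAt_id t).smul_const v).const_add x

theorem norm_sub_sub_fderiv_le [NormedAddCommGroup E] [NormedSpace ℝ E] {G : E → F} {M : ℝ}
    {x : E} (hG : Differentiable ℝ G)
    (hM : ∀ y, ‖fderiv ℝ G y - fderiv ℝ G x‖ ≤ M * ‖y - x‖) (v : E) :
    ‖G (x + v) - G x - fderiv ℝ G x v‖ ≤ M / 2 * ‖v‖ ^ 2 := by
  have hderiv : ∀ t : ℝ, HasDerivAt (fun t : ℝ => G (x + t • v) - t • fderiv ℝ G x v)
      ((fderiv ℝ G (x + t • v) - fderiv ℝ G x) v) t := fun t =>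
    (((hG _).hasFDerivAt.comp_hasDerivAt t (hasDerivAt_add_smul x v t)).sub
      ((hasDerivAt_id t).smul_const (fderiv ℝ G x v))).congr_deriv (by simp)
  have hbound : ∀ t : ℝ, 0 ≤ t →
      ‖(fderiv ℝ G (x + t • v) - fderiv ℝ G x) v‖ ≤ M * ‖v‖ ^ 2 * t ^ 1 := fun t ht =>
    calc ‖(fderiv ℝ G (x + t • v) - fderiv ℝ G x) v‖
        ≤ M * ‖x + t • v - x‖ * ‖v‖ := ContinuousLinearMap.le_of_opNorm_le _ (hM _) v
      _ = M * ‖v‖ ^ 2 * t ^ 1 := by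
        rw [add_sub_cancel_left, norm_smul, Real.norm_of_nonneg ht]
        ring
  convert norm_sub_le_of_norm_deriv_le_pow hderiv hbound zero_le_one using 1
  · simp [sub_right_comm]
  · norm_num
    ring

end Taylor

section Models

variable {E : Type*} [NormedAddCommGroup E] [InnerProductSpace ℝ E] [CompleteSpace E]

/-- The increment predicted for the step `v` from `x` by the second-order Taylor expansion of `f`,
with `fderiv ℝ (gradient f) x` as Hessian. -/
noncomputable def quadraticModel (f : E → ℝ) (x v : E) : ℝ :=
  ⟪gradient f x, v⟫ + 1 / 2 * ⟪fderiv ℝ (gradient f) x v, v⟫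

/-- The cubically regularized second-order model of the increment of `f` for the step `v` from `x`;
precomposing it with a sketching matrix `S` gives the paper's `T_S(x, ·)`. -/
noncomputable def cubicModel (f : E → ℝ) (M : ℝ) (x v : E) : ℝ :=
  quadraticModel f x v + M / 6 * ‖v‖ ^ 3

theorem differentiable_gradient_of_contDiff_two {f : E → ℝ} (hf : ContDiff ℝ 2 f) :
    Differentiable ℝ (gradient f) :=
  (InnerProductSpace.toDual ℝ E).symm.toContinuousLinearEquiv.differentiable.comp
    ((hf.fderiv_right (m := 1) (by norm_num)).differentiable one_ne_zero)

theorem abs_sub_sub_quadraticModel_le {f : E → ℝ} {M : ℝ} {x : E} (hf : Differentiable ℝ f)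
    (hf' : Differentiable ℝ (gradient f))
    (hM : ∀ y, ‖fderiv ℝ (gradient f) y - fderiv ℝ (gradient f) x‖ ≤ M * ‖y - x‖) (v : E) :
    |f (x + v) - f x - quadraticModel f x v| ≤ M / 6 * ‖v‖ ^ 3 := by
  set H := fderiv ℝ (gradient f) x with hH
  have hderiv : ∀ t : ℝ, HasDerivAt
      (fun t : ℝ => f (x + t • v) - (t * ⟪gradient f x, v⟫ + t ^ 2 * (1 / 2 * ⟪H v, v⟫)))
      ⟪gradient f (x + t • v) - gradient f x - H (t • v), v⟫ t := fun t => by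
    have hline := (hf (x + t • v)).hasGradientAt.hasFDerivAt.comp_hasDerivAt t
      (hasDerivAt_add_smul x v t)
    refine (hline.sub (((hasDerivAt_id t).mul_const ⟪gradient f x, v⟫).add
      ((hasDerivAt_pow 2 t).mul_const (1 / 2 * ⟪H v, v⟫)))).congr_deriv ?_
    simp [inner_sub_left, inner_smul_left]
    ring
  have hbound : ∀ t : ℝ, 0 ≤ t →
      ‖⟪gradient f (x + t • v) - gradient f x - H (t • v), v⟫‖ ≤ M / 2 * ‖v‖ ^ 3 * t ^ 2 :=
    fun t ht =>
    calc ‖⟪gradient f (x + t • v) - gradient f x - H (t • v), v⟫‖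
        ≤ ‖gradient f (x + t • v) - gradient f x - H (t • v)‖ * ‖v‖ := norm_inner_le_norm _ _
      _ ≤ M / 2 * ‖t • v‖ ^ 2 * ‖v‖ := by
        gcongr
        exact norm_sub_sub_fderiv_le hf' hM _
      _ = M / 2 * ‖v‖ ^ 3 * t ^ 2 := by
        rw [norm_smul, Real.norm_of_nonneg ht]
        ring
  convert norm_sub_le_of_norm_deriv_le_pow hderiv hbound zero_le_one using 1
  · simp [quadraticModel, ← hH, sub_right_comm]
  · norm_num
    ring

theorem quadraticModel_smul (f : E → ℝ) (x u : E) (p : ℝ) :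
    quadraticModel f x (p • u) =
      p * ⟪gradient f x, u⟫ + p ^ 2 / 2 * ⟪fderiv ℝ (gradient f) x u, u⟫ := by
  simp only [quadraticModel, map_smul, real_inner_smul_left, real_inner_smul_right]
  ring

end Models

section Jensen

variable {E : Type*} [NormedAddCommGroup E] [InnerProductSpace ℝ E]

theorem convexOn_inner_apply_self {B : E →L[ℝ] E} (hB : ∀ v, 0 ≤ ⟪B v, v⟫) :
    ConvexOn ℝ univ fun v => ⟪B v, v⟫ := by
  refine ⟨convex_univ, fun v _ w _ a b ha hb hab => ?_⟩
  obtain rfl : b = 1 - a := by linarith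
  have hgap : a * ⟪B v, v⟫ + (1 - a) * ⟪B w, w⟫ -
      ⟪B (a • v + (1 - a) • w), a • v + (1 - a) • w⟫ = a * (1 - a) * ⟪B (v - w), v - w⟫ := by
    simp only [map_add, map_sub, map_smul, inner_add_left, inner_add_right, inner_sub_left,
      inner_sub_right, real_inner_smul_left, real_inner_smul_right]
    ring
  have := mul_nonneg (mul_nonneg ha hb) (hB (v - w))
  simp only [smul_eq_mul]
  linarith

variable {Ω : Type*} [MeasurableSpace Ω] {μ : Measure Ω} {w : Ω → E}

theorem integrable_inner_apply_self (B : E →L[ℝ] E) (hw : MemLp w 2 μ) :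
    Integrable (fun ω => ⟪B (w ω), w ω⟫) μ := by
  refine ((hw.integrable_norm_pow two_ne_zero).const_mul ‖B‖).mono'
    ((B.continuous.comp_aestronglyMeasurable hw.1).inner hw.1) (.of_forall fun ω => ?_)
  calc ‖⟪B (w ω), w ω⟫‖ ≤ ‖B (w ω)‖ * ‖w ω‖ := norm_inner_le_norm _ _
    _ ≤ ‖B‖ * ‖w ω‖ * ‖w ω‖ := by
      gcongr
      exact B.le_opNorm _
    _ = ‖B‖ * ‖w ω‖ ^ 2 := by ring

variable [CompleteSpace E] [IsProbabilityMeasure μ]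

theorem inner_apply_integral_le {B : E →L[ℝ] E} (hB : ∀ v, 0 ≤ ⟪B v, v⟫) (hw : MemLp w 2 μ) :
    ⟪B (∫ ω, w ω ∂μ), ∫ ω, w ω ∂μ⟫ ≤ ∫ ω, ⟪B (w ω), w ω⟫ ∂μ :=
  (convexOn_inner_apply_self hB).map_integral_le (by fun_prop) isClosed_univ (by simp)
    (hw.integrable one_le_two) (integrable_inner_apply_self B hw)

theorem integral_inner_apply_self_le {B : E →L[ℝ] E} {L : ℝ} (hB : ∀ v, ⟪B v, v⟫ ≤ L * ‖v‖ ^ 2)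
    (hw : MemLp w 2 μ) :
    ∫ ω, ⟪B (w ω), w ω⟫ ∂μ ≤ ⟪B (∫ ω, w ω ∂μ), ∫ ω, w ω ∂μ⟫ +
      L * (∫ ω, ‖w ω‖ ^ 2 ∂μ - ‖∫ ω, w ω ∂μ‖ ^ 2) := by
  have hgap : ∀ v, ⟪(L • ContinuousLinearMap.id ℝ E - B) v, v⟫ = L * ‖v‖ ^ 2 - ⟪B v, v⟫ :=
    fun v => by simp [inner_sub_left, real_inner_smul_left]
  have hJensen := inner_apply_integral_le
    (B := L • ContinuousLinearMap.id ℝ E - B) (fun v => by linarith [hgap v, hB v]) hw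
  simp only [hgap] at hJensen
  rw [integral_sub ((hw.integrable_norm_pow two_ne_zero).const_mul L)
    (integrable_inner_apply_self B hw), integral_const_mul] at hJensen
  linarith

end Jensen

section Projection

variable {E : Type*} [NormedAddCommGroup E] [InnerProductSpace ℝ E] [CompleteSpace E]

theorem norm_sq_apply_of_isStarProjection {P : E →L[ℝ] E} (hP : IsStarProjection P) (u : E) :
    ‖P u‖ ^ 2 = ⟪u, P u⟫ := by
  rw [← real_inner_self_eq_norm_sq, ← ContinuousLinearMap.adjoint_inner_right,
    ← ContinuousLinearMap.star_eq_adjoint, hP.isSelfAdjoint.star_eq,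
    ← mul_apply_eq_comp, hP.isIdempotentElem.eq]

theorem norm_apply_le_of_isStarProjection {P : E →L[ℝ] E} (hP : IsStarProjection P) (u : E) :
    ‖P u‖ ≤ ‖u‖ := by
  simpa using P.le_of_opNorm_le hP.norm_le u

variable {Ω : Type*} [MeasurableSpace Ω]

/-- A random orthogonal projection `P` whose expectation is `p` times the identity. Measurability
and expectation are taken vector by vector, that is, in the strong operator topology. -/
structure IsIsotropicProjection (P : Ω → E →L[ℝ] E) (p : ℝ) (μ : Measure Ω) : Prop where
  isStarProjection : ∀ᵐ ω ∂μ, IsStarProjection (P ω)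
  aestronglyMeasurable_apply : ∀ u, AEStronglyMeasurable (fun ω => P ω u) μ
  integral_apply : ∀ u, ∫ ω, P ω u ∂μ = p • u

theorem memLp_apply_of_isStarProjection {μ : Measure Ω} [IsFiniteMeasure μ] {P : Ω → E →L[ℝ] E}
    (hP : ∀ᵐ ω ∂μ, IsStarProjection (P ω)) {u : E}
    (hPu : AEStronglyMeasurable (fun ω => P ω u) μ) (q : ENNReal) :
    MemLp (fun ω => P ω u) q μ :=
  .of_bound hPu ‖u‖ (hP.mono fun _ hω => norm_apply_le_of_isStarProjection hω u)

namespace IsIsotropicProjection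

variable {μ : Measure Ω} {P : Ω → E →L[ℝ] E} {p : ℝ}

theorem memLp_apply [IsFiniteMeasure μ] (hP : IsIsotropicProjection P p μ) (u : E)
    (q : ENNReal) : MemLp (fun ω => P ω u) q μ :=
  memLp_apply_of_isStarProjection hP.isStarProjection (hP.aestronglyMeasurable_apply u) q

theorem integral_inner_apply [IsFiniteMeasure μ] (hP : IsIsotropicProjection P p μ) (v u : E) :
    ∫ ω, ⟪v, P ω u⟫ ∂μ = p * ⟪v, u⟫ := by
  rw [integral_inner ((hP.memLp_apply u 1).integrable le_rfl), hP.integral_apply,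
    real_inner_smul_right]

theorem integral_norm_sq_apply [IsFiniteMeasure μ] (hP : IsIsotropicProjection P p μ) (u : E) :
    ∫ ω, ‖P ω u‖ ^ 2 ∂μ = p * ‖u‖ ^ 2 := by
  rw [integral_congr_ae (hP.isStarProjection.mono fun _ hω =>
    norm_sq_apply_of_isStarProjection hω u), hP.integral_inner_apply, real_inner_self_eq_norm_sq]

theorem integral_norm_cube_apply_le [IsFiniteMeasure μ] (hP : IsIsotropicProjection P p μ)
    (u : E) : ∫ ω, ‖P ω u‖ ^ 3 ∂μ ≤ p * ‖u‖ ^ 3 :=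
  calc ∫ ω, ‖P ω u‖ ^ 3 ∂μ ≤ ∫ ω, ‖u‖ * ‖P ω u‖ ^ 2 ∂μ := by
        refine integral_mono_ae ((hP.memLp_apply u 3).integrable_norm_pow three_ne_zero)
          (((hP.memLp_apply u 2).integrable_norm_pow two_ne_zero).const_mul _) ?_
        filter_upwards [hP.isStarProjection] with ω hω
        rw [pow_succ' _ 2]
        gcongr
        exact norm_apply_le_of_isStarProjection hω u
    _ = p * ‖u‖ ^ 3 := by
        rw [integral_const_mul, hP.integral_norm_sq_apply]
        ring

theorem integral_inner_apply_apply_le [IsProbabilityMeasure μ] (hP : IsIsotropicProjection P p μ)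
    {B : E →L[ℝ] E} {L : ℝ} (hB : ∀ v, ⟪B v, v⟫ ≤ L * ‖v‖ ^ 2) (u : E) :
    ∫ ω, ⟪B (P ω u), P ω u⟫ ∂μ ≤ p ^ 2 * ⟪B u, u⟫ + p * (1 - p) * L * ‖u‖ ^ 2 := by
  refine (integral_inner_apply_self_le hB (hP.memLp_apply u 2)).trans_eq ?_
  rw [hP.integral_apply, hP.integral_norm_sq_apply, map_smul, real_inner_smul_left,
    real_inner_smul_right, norm_smul, mul_pow, Real.norm_eq_abs, sq_abs]
  ring

theorem integrable_quadraticModel_apply [IsFiniteMeasure μ] (hP : IsIsotropicProjection P p μ)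
    (f : E → ℝ) (x u : E) : Integrable (fun ω => quadraticModel f x (P ω u)) μ :=
  (((hP.memLp_apply u 1).integrable le_rfl).const_inner _).add
    ((integrable_inner_apply_self _ (hP.memLp_apply u 2)).const_mul _)

theorem integrable_cubicModel_apply [IsFiniteMeasure μ] (hP : IsIsotropicProjection P p μ)
    (f : E → ℝ) (M : ℝ) (x u : E) : Integrable (fun ω => cubicModel f M x (P ω u)) μ :=
  (hP.integrable_quadraticModel_apply f x u).add
    (((hP.memLp_apply u 3).integrable_norm_pow three_ne_zero).const_mul _)

theorem integral_quadraticModel_apply_le [IsProbabilityMeasure μ]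
    (hP : IsIsotropicProjection P p μ) {f : E → ℝ} {L : ℝ} {x : E}
    (hL : ∀ v, ⟪fderiv ℝ (gradient f) x v, v⟫ ≤ L * ‖v‖ ^ 2) (u : E) :
    ∫ ω, quadraticModel f x (P ω u) ∂μ ≤
      quadraticModel f x (p • u) + p * (1 - p) * (L / 2) * ‖u‖ ^ 2 := by
  rw [quadraticModel_smul]
  simp only [quadraticModel]
  rw [integral_add (((hP.memLp_apply u 1).integrable le_rfl).const_inner _)
      ((integrable_inner_apply_self _ (hP.memLp_apply u 2)).const_mul _),
    integral_const_mul, hP.integral_inner_apply]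
  linarith [hP.integral_inner_apply_apply_le hL u]

theorem integral_cubicModel_apply_le [IsProbabilityMeasure μ] (hP : IsIsotropicProjection P p μ)
    {f : E → ℝ} {L M : ℝ} {x : E} (hM : 0 ≤ M)
    (hL : ∀ v, ⟪fderiv ℝ (gradient f) x v, v⟫ ≤ L * ‖v‖ ^ 2) (u : E) :
    ∫ ω, cubicModel f M x (P ω u) ∂μ ≤
      quadraticModel f x (p • u) + p * ((1 - p) * (L / 2) * ‖u‖ ^ 2 + M / 6 * ‖u‖ ^ 3) := by
  have hcube : M / 6 * ∫ ω, ‖P ω u‖ ^ 3 ∂μ ≤ M / 6 * (p * ‖u‖ ^ 3) := by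
    gcongr
    exact hP.integral_norm_cube_apply_le u
  simp only [cubicModel]
  rw [integral_add (hP.integrable_quadraticModel_apply f x u)
      (((hP.memLp_apply u 3).integrable_norm_pow three_ne_zero).const_mul _),
    integral_const_mul]
  linarith [hP.integral_quadraticModel_apply_le hL u]

end IsIsotropicProjection

end Projection

section Progress

variable {E : Type*} [NormedAddCommGroup E] [InnerProductSpace ℝ E] [CompleteSpace E]

theorem add_quadraticModel_smul_le_of_convexOn {f : E → ℝ} {M p : ℝ} {x y : E}
    (hconv : ConvexOn ℝ univ f) (hf : Differentiable ℝ f) (hf' : Differentiable ℝ (gradient f))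
    (hHess : ∀ z, ‖fderiv ℝ (gradient f) z - fderiv ℝ (gradient f) x‖ ≤ M * ‖z - x‖)
    (hM : 0 ≤ M) (hp0 : 0 ≤ p) (hp1 : p ≤ 1) :
    f x + quadraticModel f x (p • (y - x)) ≤
      (1 - p) * f x + p * f y + p * (M / 6 * ‖y - x‖ ^ 3) := by
  have htaylor := (abs_le.1 (abs_sub_sub_quadraticModel_le hf hf' hHess (p • (y - x)))).1
  have hchord : f (x + p • (y - x)) ≤ (1 - p) * f x + p * f y := by
    rw [show x + p • (y - x) = (1 - p) • x + p • y by module]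
    exact hconv.2 (mem_univ x) (mem_univ y) (sub_nonneg.2 hp1) hp0 (sub_add_cancel 1 p)
  have hcube : M / 6 * ‖p • (y - x)‖ ^ 3 ≤ p * (M / 6 * ‖y - x‖ ^ 3) := by
    rw [norm_smul, Real.norm_of_nonneg hp0, mul_pow, mul_left_comm]
    gcongr
    exact pow_le_of_le_one hp0 hp1 three_ne_zero
  linarith

theorem sscn_one_step_progress_general {f : E → ℝ} {L M p : ℝ} {x : E}
    (hconv : ConvexOn ℝ univ f) (hf : Differentiable ℝ f) (hf' : Differentiable ℝ (gradient f))
    (hM : 0 ≤ M) (hL : ∀ v, ⟪fderiv ℝ (gradient f) x v, v⟫ ≤ L * ‖v‖ ^ 2)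
    (hHess : ∀ z, ‖fderiv ℝ (gradient f) z - fderiv ℝ (gradient f) x‖ ≤ M * ‖z - x‖)
    {Ω : Type*} [MeasurableSpace Ω] {μ : Measure Ω} [IsProbabilityMeasure μ]
    {P : Ω → E →L[ℝ] E} (hP : IsIsotropicProjection P p μ) (hp0 : 0 ≤ p) (hp1 : p ≤ 1)
    {s : Ω → E} (hs : ∀ᵐ ω ∂μ, IsMinOn (cubicModel f M x) (range (P ω)) (s ω))
    (hint : Integrable (fun ω => f (x + s ω)) μ) (y : E) :
    ∫ ω, f (x + s ω) ∂μ ≤ (1 - p) * f x + p * f y +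
      p * ((1 - p) * (L / 2) * ‖y - x‖ ^ 2 + M / 3 * ‖y - x‖ ^ 3) := by
  have hstep : ∀ᵐ ω ∂μ, f (x + s ω) ≤ f x + cubicModel f M x (P ω (y - x)) := by
    filter_upwards [hs] with ω hω
    have hmin : cubicModel f M x (s ω) ≤ cubicModel f M x (P ω (y - x)) := hω (mem_range_self _)
    have htaylor := (abs_le.1 (abs_sub_sub_quadraticModel_le hf hf' hHess (s ω))).2
    rw [cubicModel] at hmin
    linarith
  have hmodel := hP.integrable_cubicModel_apply f M x (y - x)
  calc ∫ ω, f (x + s ω) ∂μ ≤ ∫ ω, (f x + cubicModel f M x (P ω (y - x))) ∂μ :=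
        integral_mono_ae hint ((integrable_const _).add hmodel) hstep
    _ = f x + ∫ ω, cubicModel f M x (P ω (y - x)) ∂μ := by
        rw [integral_add (integrable_const _) hmodel]
        simp
    _ ≤ _ := by
        linarith [hP.integral_cubicModel_apply_le hM hL (y - x),
          add_quadraticModel_smul_le_of_convexOn (y := y) hconv hf hf' hHess hM hp0 hp1]

end Progress

section MeasurableMatrix

variable {Ω R l m n : Type*} [MeasurableSpace Ω] [MeasurableSpace R]

theorem measurable_matrix_mul_apply [Fintype m] [NonUnitalNonAssocSemiring R] [MeasurableAdd₂ R]
    [MeasurableMul₂ R] {A : Ω → Matrix l m R} {B : Ω → Matrix m n R}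
    (hA : ∀ i j, Measurable fun ω => A ω i j) (hB : ∀ i j, Measurable fun ω => B ω i j)
    (i : l) (j : n) : Measurable fun ω => (A ω * B ω) i j := by
  simp only [Matrix.mul_apply]
  fun_prop

theorem measurable_matrix_det [Fintype n] [DecidableEq n] [CommRing R] [MeasurableAdd₂ R]
    [MeasurableMul₂ R] {A : Ω → Matrix n n R} (hA : ∀ i j, Measurable fun ω => A ω i j) :
    Measurable fun ω => (A ω).det := by
  simp only [Matrix.det_apply']
  fun_prop

theorem measurable_matrix_inv_apply [Fintype n] [DecidableEq n] [Field R] [MeasurableAdd₂ R]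
    [MeasurableMul₂ R] [MeasurableInv R] {A : Ω → Matrix n n R}
    (hA : ∀ i j, Measurable fun ω => A ω i j) (i j : n) :
    Measurable fun ω => (A ω)⁻¹ i j := by
  simp only [Matrix.inv_def, Matrix.smul_apply, Ring.inverse_eq_inv', smul_eq_mul,
    Matrix.adjugate_apply]
  refine (measurable_matrix_det hA).inv.mul (measurable_matrix_det fun k l => ?_)
  by_cases hk : k = j
  · simp [hk]
  · simpa [hk] using hA k l

end MeasurableMatrix

section Sketch

/-- The paper's `P^A = A (Aᵀ A)⁻¹ Aᵀ`, the orthogonal projection onto the column space of `A`. The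
inverse is Mathlib's total one, so this is only meaningful when `Aᵀ * A` is invertible. -/
noncomputable def sketchProjection {m n : Type*} [Fintype m] [Fintype n] [DecidableEq n]
    (A : Matrix m n ℝ) : Matrix m m ℝ :=
  A * (Aᵀ * A)⁻¹ * Aᵀ

theorem isStarProjection_sketchProjection {m n : Type*} [Fintype m] [Fintype n] [DecidableEq n]
    {A : Matrix m n ℝ} (hA : IsUnit (Aᵀ * A)) : IsStarProjection (sketchProjection A) where
  isIdempotentElem := by
    have hdet := (Matrix.isUnit_iff_isUnit_det _).1 hA
    calc sketchProjection A * sketchProjection A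
        = A * ((Aᵀ * A)⁻¹ * (Aᵀ * A)) * (Aᵀ * A)⁻¹ * Aᵀ := by
          simp only [sketchProjection, Matrix.mul_assoc]
      _ = sketchProjection A := by
          rw [Matrix.nonsing_inv_mul _ hdet, Matrix.mul_one, sketchProjection]
  isSelfAdjoint := by
    simp [isSelfAdjoint_iff, Matrix.star_eq_conjTranspose, sketchProjection,
      Matrix.conjTranspose_eq_transpose_of_trivial, Matrix.transpose_nonsing_inv, Matrix.mul_assoc]

theorem measurable_sketchProjection_apply {Ω m n : Type*} [MeasurableSpace Ω] [Fintype m]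
    [Fintype n] [DecidableEq n] {S : Ω → Matrix m n ℝ}
    (hS : ∀ i j, Measurable fun ω => S ω i j) (i j : m) :
    Measurable fun ω => sketchProjection (S ω) i j :=
  have hST : ∀ i j, Measurable fun ω => (S ω)ᵀ i j := fun i j => hS j i
  measurable_matrix_mul_apply (measurable_matrix_mul_apply hS
    (measurable_matrix_inv_apply (measurable_matrix_mul_apply hST hS))) hST i j

theorem isIsotropicProjection_toEuclideanCLM {Ω m : Type*} [MeasurableSpace Ω] [Fintype m]
    [DecidableEq m] {μ : Measure Ω} [IsFiniteMeasure μ] {Q : Ω → Matrix m m ℝ} {p : ℝ}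
    (hQ : ∀ i j, Measurable fun ω => Q ω i j) (hproj : ∀ᵐ ω ∂μ, IsStarProjection (Q ω))
    (hE : ∀ i j, ∫ ω, Q ω i j ∂μ = p * (1 : Matrix m m ℝ) i j) :
    IsIsotropicProjection (fun ω => toEuclideanCLM (𝕜 := ℝ) (Q ω)) p μ := by
  have happly : ∀ (ω : Ω) (u : EuclideanSpace ℝ m) (i : m),
      toEuclideanCLM (𝕜 := ℝ) (Q ω) u i = ∑ j, Q ω i j * u j := fun ω u i => by
    simp [Matrix.ofLp_toEuclideanCLM, Matrix.mulVec, dotProduct]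
  have hstar : ∀ᵐ ω ∂μ, IsStarProjection (toEuclideanCLM (𝕜 := ℝ) (Q ω)) :=
    hproj.mono fun _ hω => hω.map toEuclideanCLM
  have hmeas : ∀ u, AEStronglyMeasurable (fun ω => toEuclideanCLM (𝕜 := ℝ) (Q ω) u) μ := fun u => by
    refine ((WithLp.measurable_toLp 2 _).comp
      (measurable_pi_lambda (fun ω i => ∑ j, Q ω i j * u j) fun i => ?_)).aestronglyMeasurable
    fun_prop
  have hint : ∀ u i, Integrable (fun ω => toEuclideanCLM (𝕜 := ℝ) (Q ω) u i) μ := fun u =>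
    ((memLp_apply_of_isStarProjection hstar (hmeas u) 1).integrable le_rfl).eval_piLp
  have hentry : ∀ i j, Integrable (fun ω => Q ω i j) μ := fun i j => by
    simpa [happly] using hint (EuclideanSpace.single j 1) i
  refine ⟨hstar, hmeas, fun u => ?_⟩
  ext i
  rw [eval_integral_piLp (hint u)]
  simp only [happly]
  rw [integral_finsetSum _ fun j _ => (hentry i j).mul_const _]
  simp [integral_mul_const, hE, Matrix.one_apply]

theorem transpose_mulVec_fromE_dotProduct {d τ : ℕ} (A : Matrix (Fin d) (Fin τ) ℝ)
    (g : EuclideanSpace ℝ (Fin d)) (h : Fin τ → ℝ) :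
    Aᵀ.mulVec (fromE g) ⬝ᵥ h = ⟪g, toE (A.mulVec h)⟫ := by
  rw [Matrix.mulVec_transpose, ← Matrix.dotProduct_mulVec]
  simp [toE, fromE, EuclideanSpace.inner_eq_star_dotProduct, dotProduct_comm]

theorem cubicModel_toE_mulVec {d τ : ℕ} (f : EuclideanSpace ℝ (Fin d) → ℝ) (M : ℝ)
    (x : EuclideanSpace ℝ (Fin d)) (A : Matrix (Fin d) (Fin τ) ℝ) (h : Fin τ → ℝ) :
    cubicModel f M x (toE (A.mulVec h)) =
      Aᵀ.mulVec (fromE (gradient f x)) ⬝ᵥ h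
        + (1 / 2) * (Aᵀ.mulVec (fromE (fderiv ℝ (gradient f) x (toE (A.mulVec h)))) ⬝ᵥ h)
        + M / 6 * ‖toE (A.mulVec h)‖ ^ 3 := by
  simp only [cubicModel, quadraticModel, transpose_mulVec_fromE_dotProduct]

theorem range_sketchProjection_subset {d τ : ℕ} (A : Matrix (Fin d) (Fin τ) ℝ) :
    range (toEuclideanCLM (𝕜 := ℝ) (sketchProjection A)) ⊆ range fun h => toE (A.mulVec h) := by
  rintro _ ⟨u, rfl⟩
  refine ⟨((Aᵀ * A)⁻¹ * Aᵀ).mulVec u, ?_⟩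
  simp only [Matrix.mulVec_mulVec, ← Matrix.mul_assoc]
  rfl

theorem isMinOn_cubicModel_range_sketchProjection {d τ : ℕ} {f : EuclideanSpace ℝ (Fin d) → ℝ}
    {M : ℝ} {x : EuclideanSpace ℝ (Fin d)} {A : Matrix (Fin d) (Fin τ) ℝ} {h : Fin τ → ℝ}
    (hmin : ∀ h', cubicModel f M x (toE (A.mulVec h)) ≤ cubicModel f M x (toE (A.mulVec h'))) :
    IsMinOn (cubicModel f M x) (range (toEuclideanCLM (𝕜 := ℝ) (sketchProjection A)))
      (toE (A.mulVec h)) :=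
  IsMinOn.on_subset (isMinOn_iff.2 (forall_mem_range.2 hmin)) (range_sketchProjection_subset A)

end Sketch

/-- One-step expected progress of SSCN (case `ψ = 0`): if `f` is convex and
`C²` with `L`-Lipschitz gradient (`∇²f ⪯ L·I`) and `M`-Lipschitz Hessian, the random sketch
`S(ω)` has a.e. full column rank with `E[P^{S}] = (τ/d)·I`, and `h(ω)` is a.e. a global
minimizer of the cubic model `T_{S(ω)}(x, ·)`, then for the step `x⁺(ω) = x + S(ω)h(ω)` and
every `y`:
`E[f(x⁺)] ≤ (1 − τ/d) f(x) + (τ/d) f(y) + (τ/d)(((d−τ)/d)(L/2)‖y−x‖² + (M/3)‖y−x‖³)`. -/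
theorem sscn_one_step_progress
    (d τ : ℕ) (hτ1 : 1 ≤ τ) (hτd : τ ≤ d)
    (f : EuclideanSpace ℝ (Fin d) → ℝ)
    (hconv : ConvexOn ℝ Set.univ f) (hf : ContDiff ℝ 2 f)
    (L M : ℝ) (hL : 0 ≤ L) (hM : 0 ≤ M)
    (hLup : ∀ (x u : EuclideanSpace ℝ (Fin d)),
      (inner ℝ (fderiv ℝ (gradient f) x u) u : ℝ) ≤ L * ‖u‖ ^ 2)
    (hHessLip : ∀ x y : EuclideanSpace ℝ (Fin d),
      ‖fderiv ℝ (gradient f) x - fderiv ℝ (gradient f) y‖ ≤ M * ‖x - y‖)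
    {Ω : Type*} [MeasurableSpace Ω] (μ : MeasureTheory.Measure Ω) [IsProbabilityMeasure μ]
    (S : Ω → Matrix (Fin d) (Fin τ) ℝ)
    (hmeas : ∀ i j, Measurable fun ω => S ω i j)
    (hrank : ∀ᵐ ω ∂μ, IsUnit ((S ω)ᵀ * S ω))
    (hE : ∀ i j, ∫ ω, (S ω * ((S ω)ᵀ * S ω)⁻¹ * (S ω)ᵀ) i j ∂μ
      = ((τ : ℝ) / (d : ℝ)) * (1 : Matrix (Fin d) (Fin d) ℝ) i j)
    (x : EuclideanSpace ℝ (Fin d)) (h : Ω → Fin τ → ℝ)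
    (hmin : ∀ᵐ ω ∂μ, ∀ h' : Fin τ → ℝ,
      ((S ω)ᵀ.mulVec (fromE (gradient f x)) ⬝ᵥ h ω
          + (1 / 2) * ((S ω)ᵀ.mulVec
              (fromE (fderiv ℝ (gradient f) x (toE ((S ω).mulVec (h ω))))) ⬝ᵥ h ω)
          + M / 6 * ‖toE ((S ω).mulVec (h ω))‖ ^ 3)
        ≤ ((S ω)ᵀ.mulVec (fromE (gradient f x)) ⬝ᵥ h'
          + (1 / 2) * ((S ω)ᵀ.mulVec
              (fromE (fderiv ℝ (gradient f) x (toE ((S ω).mulVec h')))) ⬝ᵥ h')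
          + M / 6 * ‖toE ((S ω).mulVec h')‖ ^ 3))
    (hint : Integrable (fun ω => f (x + toE ((S ω).mulVec (h ω)))) μ) :
    ∀ y : EuclideanSpace ℝ (Fin d),
      ∫ ω, f (x + toE ((S ω).mulVec (h ω))) ∂μ
        ≤ (1 - (τ : ℝ) / (d : ℝ)) * f x + ((τ : ℝ) / (d : ℝ)) * f y
          + ((τ : ℝ) / (d : ℝ)) * ((((d : ℝ) - (τ : ℝ)) / (d : ℝ)) * (L / 2) * ‖y - x‖ ^ 2
              + (M / 3) * ‖y - x‖ ^ 3) := by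
  rw [sub_div, div_self (Nat.cast_ne_zero.2 (Nat.ne_of_gt (hτ1.trans hτd)))]
  exact sscn_one_step_progress_general hconv (hf.differentiable two_ne_zero)
    (differentiable_gradient_of_contDiff_two hf) hM (hLup x) (fun z => hHessLip z x)
    (isIsotropicProjection_toEuclideanCLM (measurable_sketchProjection_apply hmeas)
      (hrank.mono fun _ => isStarProjection_sketchProjection) hE)
    (by positivity) (div_le_one_of_le₀ (Nat.cast_le.2 hτd) d.cast_nonneg)
    (hmin.mono fun _ hω => isMinOn_cubicModel_range_sketchProjection
      (by simpa only [cubicModel_toE_mulVec] using hω)) hint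
end

section
/- Let d, τ, L, M, R be positive reals with τ ≤ d, and let (δ_k)_{k≥0} be a sequence of nonnegative reals such that for every k ≥ 0 and every α ∈ [0,1]: δ_{k+1} ≤ (1 − (τ/d)α)·δ_k + (τ/d)·((d−τ)/d)·(L R²/2)·α² + (τ/d)·(M R³/3)·α³. Then for every k ≥ 1: δ_k ≤ ((d−τ)/τ)·(4.5 L R²)/k + (d/τ)²·(9 M R³)/k² + δ_0 / (1 + (1/4)·((τ/d)·k)³). -/
/-!
Take `t = τ / d` and weigh the gap `δ_n` by `W n = 1 + (t n)³ / 4`. The step size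
`α_k = (W (k + 1) - W k) / (t W (k + 1))` satisfies `W (k + 1) (1 - t α_k) = W k`, so the weighted
gaps telescope and only the error terms accumulate. It is admissible, i.e. at most `1`, because
`x³ - 3 x² + 4 = (x + 1) (x - 2)²`, and `α_k ≤ 3 / (t (k + 1))` makes the accumulated errors
`O(n²)` and `O(n)` over `n` steps. Dividing by `W n` gives the three terms of the rate.
-/

section CubicWeight

variable {K : Type*} [Field K] {t : K}

/-- The weight `W n` of the `n`-th gap in the Lyapunov function `W n * δ n`. It is normalised to
`W 0 = 1`, so that the initial gap enters the final rate as `δ 0 / W n`. -/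
def cubicWeight (t : K) (n : ℕ) : K := 1 + 1 / 4 * (t * n) ^ 3

/-- The step size `α_k` used in the `k`-th recurrence step, chosen as the solution of
`W (k + 1) * (1 - t * α_k) = W k`. -/
def cubicStep (t : K) (k : ℕ) : K :=
  (cubicWeight t (k + 1) - cubicWeight t k) / (t * cubicWeight t (k + 1))

variable [LinearOrder K] [IsStrictOrderedRing K]

lemma cubicWeight_pos (ht : 0 ≤ t) (n : ℕ) : 0 < cubicWeight t n := by
  unfold cubicWeight
  positivity

lemma cubicWeight_mono (ht : 0 ≤ t) : Monotone (cubicWeight t) := by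
  intro m n hmn
  unfold cubicWeight
  gcongr

lemma cubicWeight_succ_sub_le (ht : 0 ≤ t) (k : ℕ) :
    cubicWeight t (k + 1) - cubicWeight t k ≤ 3 / 4 * t ^ 3 * (k + 1) ^ 2 := by
  have hexpand : 3 / 4 * t ^ 3 * ((k : K) + 1) ^ 2 - (cubicWeight t (k + 1) - cubicWeight t k) =
      t ^ 3 * (3 * k + 2) / 4 := by
    simp only [cubicWeight, Nat.cast_succ]
    ring
  have : 0 ≤ t ^ 3 * (3 * (k : K) + 2) / 4 := by positivity
  linarith

lemma three_fourths_mul_sq_le_cubicWeight (ht : 0 ≤ t) (n : ℕ) :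
    3 / 4 * (t * n) ^ 2 ≤ cubicWeight t n := by
  have hfactor : cubicWeight t n - 3 / 4 * (t * n) ^ 2 = (t * n + 1) * (t * n - 2) ^ 2 / 4 := by
    unfold cubicWeight
    ring
  have : 0 ≤ (t * n + 1) * (t * n - 2) ^ 2 / 4 := by positivity
  linarith

lemma cubicStep_nonneg (ht : 0 ≤ t) (k : ℕ) : 0 ≤ cubicStep t k :=
  div_nonneg (sub_nonneg.2 (cubicWeight_mono ht k.le_succ))
    (mul_nonneg ht (cubicWeight_pos ht _).le)

lemma cubicWeight_succ_mul_cubicStep (ht : 0 < t) (k : ℕ) :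
    cubicWeight t (k + 1) * cubicStep t k = (cubicWeight t (k + 1) - cubicWeight t k) / t := by
  have := (cubicWeight_pos ht.le (k + 1)).ne'
  unfold cubicStep
  field_simp

lemma cubicWeight_succ_mul_one_sub (ht : 0 < t) (k : ℕ) :
    cubicWeight t (k + 1) * (1 - t * cubicStep t k) = cubicWeight t k := by
  rw [mul_sub, mul_one, mul_left_comm, cubicWeight_succ_mul_cubicStep ht, mul_div_cancel₀ _ ht.ne',
    sub_sub_cancel]

lemma cubicWeight_succ_mul_cubicStep_le (ht : 0 < t) (k : ℕ) :
    cubicWeight t (k + 1) * cubicStep t k ≤ 3 / 4 * (t * (k + 1)) ^ 2 := by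
  rw [cubicWeight_succ_mul_cubicStep ht, div_le_iff₀ ht]
  exact (cubicWeight_succ_sub_le ht.le k).trans_eq (by ring)

lemma cubicStep_le_one (ht : 0 < t) (k : ℕ) : cubicStep t k ≤ 1 := by
  refine le_of_mul_le_mul_left ?_ (cubicWeight_pos ht.le (k + 1))
  calc cubicWeight t (k + 1) * cubicStep t k
      ≤ 3 / 4 * (t * (k + 1)) ^ 2 := cubicWeight_succ_mul_cubicStep_le ht k
    _ ≤ cubicWeight t (k + 1) := by
      exact_mod_cast three_fourths_mul_sq_le_cubicWeight ht.le (k + 1)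
    _ = cubicWeight t (k + 1) * 1 := (mul_one _).symm

lemma cubicStep_le_three_div (ht : 0 < t) (k : ℕ) : cubicStep t k ≤ 3 / (t * (k + 1)) := by
  refine le_of_mul_le_mul_left ?_ (cubicWeight_pos ht.le (k + 1))
  calc cubicWeight t (k + 1) * cubicStep t k
      ≤ 3 / 4 * (t * (k + 1)) ^ 2 := cubicWeight_succ_mul_cubicStep_le ht k
    _ = 1 / 4 * (t * (k + 1)) ^ 3 * (3 / (t * (k + 1))) := by field_simp
    _ ≤ cubicWeight t (k + 1) * (3 / (t * (k + 1))) := by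
      gcongr
      simp [cubicWeight]

lemma cubicWeight_succ_mul_cubicStep_sq_le (ht : 0 < t) (k : ℕ) :
    cubicWeight t (k + 1) * cubicStep t k ^ 2 ≤ 9 / 4 * (t * (k + 1)) := by
  calc cubicWeight t (k + 1) * cubicStep t k ^ 2
      = cubicWeight t (k + 1) * cubicStep t k * cubicStep t k := by ring
    _ ≤ 3 / 4 * (t * (k + 1)) ^ 2 * (3 / (t * (k + 1))) :=
      mul_le_mul (cubicWeight_succ_mul_cubicStep_le ht k) (cubicStep_le_three_div ht k)
        (cubicStep_nonneg ht.le k) (by positivity)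
    _ = 9 / 4 * (t * (k + 1)) := by field_simp; norm_num

lemma cubicWeight_succ_mul_cubicStep_cube_le (ht : 0 < t) (k : ℕ) :
    cubicWeight t (k + 1) * cubicStep t k ^ 3 ≤ 27 / 4 := by
  calc cubicWeight t (k + 1) * cubicStep t k ^ 3
      = cubicWeight t (k + 1) * cubicStep t k ^ 2 * cubicStep t k := by ring
    _ ≤ 9 / 4 * (t * (k + 1)) * (3 / (t * (k + 1))) :=
      mul_le_mul (cubicWeight_succ_mul_cubicStep_sq_le ht k) (cubicStep_le_three_div ht k)
        (cubicStep_nonneg ht.le k) (by positivity)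
    _ = 27 / 4 := by field_simp; norm_num

lemma cubicWeight_succ_mul_le {A B x y : K} (ht : 0 < t) (hA : 0 ≤ A) (hB : 0 ≤ B)
    (hxy : ∀ α : K, 0 ≤ α → α ≤ 1 → y ≤ (1 - t * α) * x + t * A * α ^ 2 + t * B * α ^ 3) (k : ℕ) :
    cubicWeight t (k + 1) * y ≤
      cubicWeight t k * x + 9 / 4 * A * t ^ 2 * (k + 1) + 27 / 4 * B * t := by
  have hstep := hxy _ (cubicStep_nonneg ht.le k) (cubicStep_le_one ht k)
  calc cubicWeight t (k + 1) * y
      ≤ cubicWeight t (k + 1) * ((1 - t * cubicStep t k) * x + t * A * cubicStep t k ^ 2 +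
          t * B * cubicStep t k ^ 3) :=
        mul_le_mul_of_nonneg_left hstep (cubicWeight_pos ht.le _).le
    _ = cubicWeight t (k + 1) * (1 - t * cubicStep t k) * x +
          t * A * (cubicWeight t (k + 1) * cubicStep t k ^ 2) +
          t * B * (cubicWeight t (k + 1) * cubicStep t k ^ 3) := by ring
    _ ≤ cubicWeight t k * x + t * A * (9 / 4 * (t * (k + 1))) + t * B * (27 / 4) := by
        rw [cubicWeight_succ_mul_one_sub ht]
        linear_combination t * A * cubicWeight_succ_mul_cubicStep_sq_le ht k +
          t * B * cubicWeight_succ_mul_cubicStep_cube_le ht k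
    _ = cubicWeight t k * x + 9 / 4 * A * t ^ 2 * (k + 1) + 27 / 4 * B * t := by ring

section Recurrence

variable {A B : K} {δ : ℕ → K}

lemma cubicWeight_mul_le (ht : 0 < t) (hA : 0 ≤ A) (hB : 0 ≤ B)
    (hrec : ∀ k : ℕ, ∀ α : K, 0 ≤ α → α ≤ 1 →
      δ (k + 1) ≤ (1 - t * α) * δ k + t * A * α ^ 2 + t * B * α ^ 3) (n : ℕ) :
    cubicWeight t n * δ n ≤ δ 0 + 9 / 4 * A * (t * n) ^ 2 + 27 / 4 * B * (t * n) := by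
  induction n with
  | zero => simp [cubicWeight]
  | succ n ih =>
    have hslack : 0 ≤ 9 / 4 * A * t ^ 2 * n := by positivity
    push_cast
    linear_combination ih + cubicWeight_succ_mul_le ht hA hB (hrec n) n + hslack

theorem sscn_global_rate_convex_general (ht : 0 < t) (hA : 0 ≤ A) (hB : 0 ≤ B)
    (hrec : ∀ k : ℕ, ∀ α : K, 0 ≤ α → α ≤ 1 →
      δ (k + 1) ≤ (1 - t * α) * δ k + t * A * α ^ 2 + t * B * α ^ 3)
    {n : ℕ} (hn : 1 ≤ n) :
    δ n ≤ 9 * A / (t * n) + 27 * B / (t * n) ^ 2 + δ 0 / (1 + 1 / 4 * (t * n) ^ 3) := by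
  have : (0 : K) < n := by exact_mod_cast hn
  have hW := cubicWeight_pos ht.le n
  refine le_of_mul_le_mul_left ?_ hW
  calc cubicWeight t n * δ n
      ≤ δ 0 + 9 / 4 * A * (t * n) ^ 2 + 27 / 4 * B * (t * n) := cubicWeight_mul_le ht hA hB hrec n
    _ = 1 / 4 * (t * n) ^ 3 * (9 * A / (t * n) + 27 * B / (t * n) ^ 2) + δ 0 := by
      field_simp
      ring
    _ ≤ cubicWeight t n * (9 * A / (t * n) + 27 * B / (t * n) ^ 2) + δ 0 := by
      gcongr
      simp [cubicWeight]
    _ = cubicWeight t n *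
        (9 * A / (t * n) + 27 * B / (t * n) ^ 2 + δ 0 / cubicWeight t n) := by
      rw [mul_add _ _ (δ 0 / _), mul_div_cancel₀ _ hW.ne']

end Recurrence

end CubicWeight

/-- Global convergence rate of SSCN for convex functions (Theorem 1),
stated for the sequence of expected optimality gaps `δ_k`: if the one-step recurrence
`δ_{k+1} ≤ (1 − (τ/d)α)δ_k + (τ/d)((d−τ)/d)(LR²/2)α² + (τ/d)(MR³/3)α³` holds for all
`α ∈ [0,1]`, then for every `k ≥ 1`,
`δ_k ≤ ((d−τ)/τ)(4.5LR²)/k + (d/τ)²(9MR³)/k² + δ₀/(1 + ¼((τ/d)k)³)`. -/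
theorem sscn_global_rate_convex
    (d τ L M R : ℝ) (hd : 0 < d) (hτ : 0 < τ) (hL : 0 < L) (hM : 0 < M) (hR : 0 < R)
    (hτd : τ ≤ d)
    (δ : ℕ → ℝ) (hδ : ∀ k, 0 ≤ δ k)
    (hrec : ∀ k : ℕ, ∀ α : ℝ, 0 ≤ α → α ≤ 1 →
      δ (k + 1) ≤ (1 - (τ / d) * α) * δ k
        + (τ / d) * ((d - τ) / d) * (L * R ^ 2 / 2) * α ^ 2
        + (τ / d) * (M * R ^ 3 / 3) * α ^ 3) :
    ∀ k : ℕ, 1 ≤ k →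
      δ k ≤ ((d - τ) / τ) * (4.5 * L * R ^ 2) / k
        + (d / τ) ^ 2 * (9 * M * R ^ 3) / (k : ℝ) ^ 2
        + δ 0 / (1 + (1 / 4) * ((τ / d) * k) ^ 3) := by
  intro k hk
  have hA : 0 ≤ (d - τ) / d * (L * R ^ 2 / 2) :=
    mul_nonneg (div_nonneg (sub_nonneg.2 hτd) hd.le) (by positivity)
  have hB : 0 ≤ M * R ^ 3 / 3 := by positivity
  refine (sscn_global_rate_convex_general (div_pos hτ hd) hA hB
    (by simpa only [mul_assoc] using hrec) hk).trans_eq ?_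
  congr 1
  field_simp
  ring
end

section
/- Let d, τ, L, M, R, μ be positive reals with τ ≤ d, and let (δ_k)_{k≥0} be a sequence of nonnegative reals such that for every k ≥ 0 and every α ∈ [0,1]: δ_{k+1} ≤ (1 − (τ/d)α)·δ_k + (τ/d)·((d−τ)/d)·(L R²/2)·α² + (τ/d)·(M R³/3)·α³, and suppose additionally R² ≤ (2/μ)·δ_0. Then for every integer k ≥ 1 satisfying all three of: k ≥ 108·((d−τ)/τ)·(L/μ), k ≥ (d/τ)·√(108·M R/μ), and k ≥ (d/τ)·20^{1/3}, one has δ_k ≤ (1/2)·δ_0. -/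
/-!
Running the recurrence with the constant step `α = d / (τ k)` makes its contraction factor
`1 - 1/k`, so `k` iterations shrink the initial gap by `(1 - 1/k)^k ≤ e⁻¹`. The error injected at
each iteration carries the weight `1/k`, and the lower bounds on `k` keep the quadratic error below
`δ₀/c` and the cubic one below `2δ₀/(3c)`, where `c = 108` in the paper. Hence
`δ_k ≤ (e⁻¹ + 5/(3c)) δ₀`, and `e⁻¹ + 5/324 < 1/2`.
-/

theorem le_exp_neg_mul_add_of_le_one_sub_mul_add {u : ℕ → ℝ} {θ b : ℝ} {n : ℕ} (hθ : θ ≤ 1)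
    (hb : 0 ≤ b) (hu : 0 ≤ u 0) (hstep : ∀ j < n, u (j + 1) ≤ (1 - θ) * u j + θ * b) :
    u n ≤ Real.exp (-(n * θ)) * u 0 + b := by
  have hθ' : 0 ≤ 1 - θ := sub_nonneg.2 hθ
  have hgeom : u n - b ≤ (1 - θ) ^ n * (u 0 - b) :=
    le_geom (u := fun j ↦ u j - b) hθ' n fun j hj ↦ by linarith [hstep j hj]
  have hexp : (1 - θ) ^ n ≤ Real.exp (-(n * θ)) :=
    calc (1 - θ) ^ n ≤ Real.exp (-θ) ^ n := pow_le_pow_left₀ hθ' (Real.one_sub_le_exp_neg θ) n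
      _ = Real.exp (-(n * θ)) := by rw [← Real.exp_nat_mul, mul_neg]
  calc u n ≤ (1 - θ) ^ n * (u 0 - b) + b := sub_le_iff_le_add.1 hgeom
    _ ≤ (1 - θ) ^ n * u 0 + b := by gcongr; exact sub_le_self _ hb
    _ ≤ Real.exp (-(n * θ)) * u 0 + b := by gcongr

section ErrorTerms

variable {R μ c k D : ℝ}

theorem quadratic_error_le {d τ L : ℝ} (hd : d ≠ 0) (hμ : 0 < μ) (hc : 0 < c) (hk : 0 < k)
    (hR : μ / 2 * R ^ 2 ≤ D) (hkL : c * ((d - τ) / τ) * (L / μ) ≤ k) :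
    (d - τ) / d * (L * R ^ 2 / 2) * (d / τ / k) ≤ D / c := by
  have hratio : (d - τ) / τ * (L / μ) / k ≤ 1 / c := by
    rw [div_le_div_iff₀ hk hc]
    linarith
  calc (d - τ) / d * (L * R ^ 2 / 2) * (d / τ / k)
      = (d - τ) / τ * (L / μ) / k * (μ / 2 * R ^ 2) := by field_simp
    _ ≤ 1 / c * (μ / 2 * R ^ 2) := by gcongr
    _ ≤ 1 / c * D := by gcongr
    _ = D / c := one_div_mul_eq_div c D

theorem cubic_error_le {s M : ℝ} (hs : 0 ≤ s) (hM : 0 ≤ M) (hR₀ : 0 ≤ R) (hμ : 0 < μ)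
    (hc : 0 < c) (hk : 0 < k) (hR : μ / 2 * R ^ 2 ≤ D) (hkM : s * √(c * M * R / μ) ≤ k) :
    M * R ^ 3 / 3 * (s / k) ^ 2 ≤ 2 * D / (3 * c) := by
  have hsq : s ^ 2 * (c * M * R / μ) ≤ k ^ 2 := by
    have := pow_le_pow_left₀ (by positivity) hkM 2
    rwa [mul_pow, Real.sq_sqrt (by positivity)] at this
  have hratio : M * R / μ * (s / k) ^ 2 ≤ 1 / c := by
    rw [div_pow, mul_div_assoc', div_le_div_iff₀ (pow_pos hk 2) hc, one_mul]
    calc M * R / μ * s ^ 2 * c = s ^ 2 * (c * M * R / μ) := by ring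
      _ ≤ k ^ 2 := hsq
  calc M * R ^ 3 / 3 * (s / k) ^ 2
      = M * R / μ * (s / k) ^ 2 * (2 / 3 * (μ / 2 * R ^ 2)) := by field_simp
    _ ≤ 1 / c * (2 / 3 * (μ / 2 * R ^ 2)) := by gcongr
    _ ≤ 1 / c * (2 / 3 * D) := by gcongr
    _ = 2 * D / (3 * c) := by ring

end ErrorTerms

theorem sscn_halving_strongly_convex_general {d τ L M R μ c : ℝ} (hd : 0 < d) (hτ : 0 < τ)
    (hM : 0 ≤ M) (hR : 0 ≤ R) (hμ : 0 < μ) (hc : 0 < c) {δ : ℕ → ℝ}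
    (hrec : ∀ k : ℕ, ∀ α : ℝ, 0 ≤ α → α ≤ 1 →
      δ (k + 1) ≤ (1 - (τ / d) * α) * δ k
        + (τ / d) * ((d - τ) / d) * (L * R ^ 2 / 2) * α ^ 2
        + (τ / d) * (M * R ^ 3 / 3) * α ^ 3)
    (hR2 : R ^ 2 ≤ (2 / μ) * δ 0) {k : ℕ} (hkL : c * ((d - τ) / τ) * (L / μ) ≤ k)
    (hkM : (d / τ) * √(c * M * R / μ) ≤ k) (hkd : d / τ ≤ k) :
    δ k ≤ (Real.exp (-1) + 5 / (3 * c)) * δ 0 := by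
  have hk : (0 : ℝ) < k := (div_pos hd hτ).trans_le hkd
  have hgap : μ / 2 * R ^ 2 ≤ δ 0 := by
    rwa [← inv_div, inv_mul_le_iff₀ (by positivity)]
  have hδ₀ : 0 ≤ δ 0 := le_trans (by positivity) hgap
  have hα : d / τ / k ≤ 1 := div_le_one_of_le₀ hkd hk.le
  have hθ : τ / d * (d / τ / k) = 1 / k := by field_simp
  have herror : (d - τ) / d * (L * R ^ 2 / 2) * (d / τ / k) + M * R ^ 3 / 3 * (d / τ / k) ^ 2
      ≤ 5 / (3 * c) * δ 0 :=
    calc _ ≤ δ 0 / c + 2 * δ 0 / (3 * c) :=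
          add_le_add (quadratic_error_le hd.ne' hμ hc hk hgap hkL)
            (cubic_error_le (by positivity) hM hR hμ hc hk hgap hkM)
      _ = 5 / (3 * c) * δ 0 := by ring
  have hstep (j : ℕ) : δ (j + 1) ≤ (1 - 1 / k) * δ j + 1 / k * (5 / (3 * c) * δ 0) := by
    refine (hrec j _ (by positivity) hα).trans ?_
    rw [← hθ]
    linarith [mul_le_mul_of_nonneg_left herror (by positivity : 0 ≤ τ / d * (d / τ / k))]
  have hθ_le : (1 : ℝ) / k ≤ 1 := div_le_one_of_le₀ (mod_cast hk) hk.le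
  have hdecay := le_exp_neg_mul_add_of_le_one_sub_mul_add hθ_le (by positivity) hδ₀
    fun j (_ : j < k) ↦ hstep j
  rwa [mul_one_div_cancel hk.ne', ← add_mul] at hdecay

/-- Halving step of the linear rate of SSCN for strongly convex functions
(Theorem 2): under the one-step recurrence for the expected gaps `δ_k` and the strong
convexity bound `R² ≤ (2/μ)δ₀`, every iteration count `k` satisfying the three lower bounds
`k ≥ 108((d−τ)/τ)(L/μ)`, `k ≥ (d/τ)√(108MR/μ)` and `k ≥ (d/τ)·20^(1/3)` yields
`δ_k ≤ δ₀/2`. -/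
theorem sscn_halving_strongly_convex
    (d τ L M R μ : ℝ) (hd : 0 < d) (hτ : 0 < τ) (hL : 0 < L) (hM : 0 < M) (hR : 0 < R)
    (hμ : 0 < μ) (hτd : τ ≤ d)
    (δ : ℕ → ℝ) (hδ : ∀ k, 0 ≤ δ k)
    (hrec : ∀ k : ℕ, ∀ α : ℝ, 0 ≤ α → α ≤ 1 →
      δ (k + 1) ≤ (1 - (τ / d) * α) * δ k
        + (τ / d) * ((d - τ) / d) * (L * R ^ 2 / 2) * α ^ 2
        + (τ / d) * (M * R ^ 3 / 3) * α ^ 3)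
    (hR2 : R ^ 2 ≤ (2 / μ) * δ 0) :
    ∀ k : ℕ, 1 ≤ k →
      108 * ((d - τ) / τ) * (L / μ) ≤ (k : ℝ) →
      (d / τ) * Real.sqrt (108 * M * R / μ) ≤ (k : ℝ) →
      (d / τ) * (20 : ℝ) ^ ((1 : ℝ) / 3) ≤ (k : ℝ) →
      δ k ≤ (1 / 2) * δ 0 := by
  intro k _ hkL hkM hk20
  have h20 : (1 : ℝ) ≤ 20 ^ ((1 : ℝ) / 3) := Real.one_le_rpow (by norm_num) (by norm_num)
  have hkd : d / τ ≤ k := (le_mul_of_one_le_right (by positivity) h20).trans hk20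
  calc δ k ≤ (Real.exp (-1) + 5 / (3 * 108)) * δ 0 :=
        sscn_halving_strongly_convex_general hd hτ hM.le hR.le hμ (by norm_num) hrec hR2 hkL hkM hkd
    _ ≤ 1 / 2 * δ 0 := mul_le_mul_of_nonneg_right (by linarith [Real.exp_neg_one_lt_d9]) (hδ 0)
end

section
/- Let A ∈ ℝ^{d×d} be symmetric positive definite, let x* ∈ ℝ^d, and define f(x) := (1/2)(x − x*)ᵀA(x − x*). Let (Ω, μ) be a probability space and S : Ω → ℝ^{d×τ} a measurable map such that S(ω)ᵀ A S(ω) is invertible for almost every ω. Given x ∈ ℝ^d, define for almost every ω the exact subspace-minimization step x⁺(ω) := x − S(ω)·(S(ω)ᵀ A S(ω))⁻¹·S(ω)ᵀ·A·(x − x*) (which minimizes f over the affine subspace x + range(S(ω))). Let ζ := λ_min( A^{1/2} · E[ S(ω)(S(ω)ᵀ A S(ω))⁻¹ S(ω)ᵀ ] · A^{1/2} ). Then 0 ≤ ζ ≤ 1 and for every x ∈ ℝ^d: E[f(x⁺)] ≤ (1 − ζ)·f(x). -/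
/-!
Write `B = A^{1/2}`, `y = x - x*` and `G = S (Sᵀ A S)⁻¹ Sᵀ`. Then `f x = ½ ‖B y‖²`, and `G A G = G`
says that `P = B G B` is an orthogonal projection. One step replaces `B y` by `(1 - P) B y`, so it
lowers `f` by exactly `½ ⟨P B y, B y⟩`. On average this is `½ ⟨E[P] B y, B y⟩ ≥ ζ f x`,
where `ζ = λ_min(E[P])` lies in `[0, 1]` because `0 ≤ P ≤ 1`.
-/

open Matrix MeasureTheory
open scoped MatrixOrder

section Algebra

variable {k n m R : Type*} [Fintype k] [Fintype n] [Fintype m] [DecidableEq m] [CommRing R]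

/-- The matrix `S (Sᵀ A S)⁻¹ Sᵀ` whose expectation enters the stochastic condition number. If
`Sᵀ A S` is singular, the value is `0`, since then `(Sᵀ A S)⁻¹ = 0` in Mathlib. -/
noncomputable def sketchedInverse (A : Matrix n n R) (S : Matrix n m R) : Matrix n n R :=
  S * (Sᵀ * A * S)⁻¹ * Sᵀ

/-- The sketch-and-project step from `x` towards `xstar`, which minimizes
`y ↦ ½ (y - xstar)ᵀ A (y - xstar)` over `x + range S` when `A` is positive semidefinite and
`Sᵀ A S` is invertible. -/
noncomputable def sketchStep (A : Matrix n n R) (xstar : n → R) (S : Matrix n m R) (x : n → R) :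
    n → R :=
  x - S *ᵥ ((Sᵀ * A * S)⁻¹ *ᵥ (Sᵀ *ᵥ (A *ᵥ (x - xstar))))

theorem isSymm_sketchedInverse {A : Matrix n n R} (hA : A.IsSymm) (S : Matrix n m R) :
    (sketchedInverse A S).IsSymm := by
  simp only [IsSymm, sketchedInverse, transpose_mul, transpose_nonsing_inv, transpose_transpose,
    hA.eq, Matrix.mul_assoc]

theorem sketchedInverse_mul_mul_self {A : Matrix n n R} {S : Matrix n m R}
    (h : IsUnit (Sᵀ * A * S)) :
    sketchedInverse A S * A * sketchedInverse A S = sketchedInverse A S := by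
  calc
    _ = S * ((Sᵀ * A * S)⁻¹ * (Sᵀ * A * S)) * (Sᵀ * A * S)⁻¹ * Sᵀ := by
      simp only [sketchedInverse, Matrix.mul_assoc]
    _ = sketchedInverse A S := by
      rw [nonsing_inv_mul _ ((isUnit_iff_isUnit_det _).1 h), Matrix.mul_one, sketchedInverse]

theorem isStarProjection_mul_sketchedInverse_mul_transpose [StarRing R] [TrivialStar R]
    {A : Matrix n n R} {L : Matrix k n R} (hL : Lᵀ * L = A) {S : Matrix n m R}
    (h : IsUnit (Sᵀ * A * S)) : IsStarProjection (L * sketchedInverse A S * Lᵀ) where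
  isIdempotentElem := by
    calc
      _ = L * (sketchedInverse A S * (Lᵀ * L) * sketchedInverse A S) * Lᵀ := by
        simp only [Matrix.mul_assoc]
      _ = L * sketchedInverse A S * Lᵀ := by rw [hL, sketchedInverse_mul_mul_self h]
  isSelfAdjoint := by
    have hA : A.IsSymm := by rw [← hL, IsSymm, transpose_mul, transpose_transpose]
    rw [IsSelfAdjoint, star_eq_conjTranspose, conjTranspose_eq_transpose_of_trivial]
    simp only [transpose_mul, transpose_transpose, (isSymm_sketchedInverse hA S).eq,
      Matrix.mul_assoc]

theorem mulVec_sketchStep_sub [DecidableEq k] {A : Matrix n n R} {L : Matrix k n R}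
    (hL : Lᵀ * L = A) (xstar : n → R) (S : Matrix n m R) (x : n → R) :
    L *ᵥ (sketchStep A xstar S x - xstar) =
      (1 - L * sketchedInverse A S * Lᵀ) *ᵥ (L *ᵥ (x - xstar)) := by
  simp only [sketchStep, sketchedInverse, sub_right_comm x _ xstar, mulVec_sub L (x - xstar),
    mulVec_mulVec, Matrix.sub_mul, Matrix.one_mul, sub_mulVec, Matrix.mul_assoc, ← hL]

theorem transpose_mul_self_mulVec_dotProduct (L : Matrix k n R) (v : n → R) :
    (Lᵀ * L) *ᵥ v ⬝ᵥ v = L *ᵥ v ⬝ᵥ L *ᵥ v := by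
  rw [← mulVec_mulVec, dotProduct_comm, dotProduct_transpose_mulVec]

theorem mulVec_dotProduct_mulVec_self_of_isStarProjection [StarRing R] [TrivialStar R]
    {P : Matrix n n R} (hP : IsStarProjection P) (v : n → R) :
    P *ᵥ v ⬝ᵥ P *ᵥ v = P *ᵥ v ⬝ᵥ v := by
  have hsymm : Pᵀ = P := by
    rw [← conjTranspose_eq_transpose_of_trivial]
    exact hP.isSelfAdjoint
  rw [← transpose_mul_self_mulVec_dotProduct, hsymm, hP.isIdempotentElem.eq]

theorem mulVec_dotProduct_self_nonneg_of_isStarProjection [StarRing R] [TrivialStar R]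
    [PartialOrder R] [StarOrderedRing R] {P : Matrix n n R} (hP : IsStarProjection P) (v : n → R) :
    0 ≤ P *ᵥ v ⬝ᵥ v := by
  rw [← mulVec_dotProduct_mulVec_self_of_isStarProjection hP]
  simpa only [star_trivial] using dotProduct_self_star_nonneg (P *ᵥ v)

end Algebra

section Objective

variable {k n m : Type*} [Fintype k] [Fintype n] [Fintype m] [DecidableEq m]

/-- The quadratic objective `½ (x - xstar)ᵀ A (x - xstar)` minimized by sketch-and-project. -/
noncomputable def quadraticObjective (A : Matrix n n ℝ) (xstar x : n → ℝ) : ℝ :=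
  (1 / 2) * (A *ᵥ (x - xstar) ⬝ᵥ (x - xstar))

theorem quadraticObjective_sketchStep {A : Matrix n n ℝ} {L : Matrix k n ℝ} (hL : Lᵀ * L = A)
    {S : Matrix n m ℝ} (h : IsUnit (Sᵀ * A * S)) (xstar x : n → ℝ) :
    quadraticObjective A xstar (sketchStep A xstar S x) = quadraticObjective A xstar x -
      (1 / 2) * ((L * sketchedInverse A S * Lᵀ) *ᵥ (L *ᵥ (x - xstar)) ⬝ᵥ (L *ᵥ (x - xstar))) := by
  classical
  have hproj := (isStarProjection_mul_sketchedInverse_mul_transpose hL h).one_sub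
  have hobj (z : n → ℝ) : quadraticObjective A xstar z =
      (1 / 2) * (L *ᵥ (z - xstar) ⬝ᵥ L *ᵥ (z - xstar)) := by
    rw [quadraticObjective, ← hL, transpose_mul_self_mulVec_dotProduct]
  rw [hobj, hobj, mulVec_sketchStep_sub hL,
    mulVec_dotProduct_mulVec_self_of_isStarProjection hproj, sub_mulVec, one_mulVec,
    sub_dotProduct, mul_sub]

end Objective

section Rayleigh

variable {n : Type*} [Fintype n]

/-- The lower bounds of the Rayleigh quotient of `M`. For symmetric `M` the greatest one is
`λ_min(M)`; it does not exist if the dimension is zero. -/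
def rayleighLowerBounds (M : Matrix n n ℝ) : Set ℝ :=
  {t | ∀ v : n → ℝ, t * ‖WithLp.toLp 2 v‖ ^ 2 ≤ M *ᵥ v ⬝ᵥ v}

theorem mem_rayleighLowerBounds_iff {M : Matrix n n ℝ} {t : ℝ} :
    t ∈ rayleighLowerBounds M ↔ ∀ v, t * (v ⬝ᵥ v) ≤ M *ᵥ v ⬝ᵥ v := by
  have hnorm (v : n → ℝ) : ‖WithLp.toLp 2 v‖ ^ 2 = v ⬝ᵥ v := by
    simp only [EuclideanSpace.real_norm_sq_eq, dotProduct, ← sq]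
  simp only [rayleighLowerBounds, Set.mem_ofPred_eq, hnorm]

theorem nonempty_of_isGreatest_rayleighLowerBounds {M : Matrix n n ℝ} {t : ℝ}
    (ht : IsGreatest (rayleighLowerBounds M) t) : Nonempty n := by
  by_contra hempty
  rw [not_nonempty_iff] at hempty
  have hmem : t + 1 ∈ rayleighLowerBounds M := by
    simp [mem_rayleighLowerBounds_iff]
  linarith [ht.2 hmem]

theorem le_of_mem_rayleighLowerBounds [Nonempty n] {M : Matrix n n ℝ} {t c : ℝ}
    (ht : t ∈ rayleighLowerBounds M) (hM : ∀ v, M *ᵥ v ⬝ᵥ v ≤ c * (v ⬝ᵥ v)) : t ≤ c := by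
  have hpos : (0 : ℝ) < (1 : n → ℝ) ⬝ᵥ 1 := by
    simp [Fintype.card_pos]
  exact le_of_mul_le_mul_right ((mem_rayleighLowerBounds_iff.1 ht 1).trans (hM 1)) hpos

end Rayleigh

section Expectation

variable {k l m n Ω : Type*} [MeasurableSpace Ω] {μ : Measure Ω}

/-- The expectation of a random matrix, taken entry by entry. An entry that is not integrable
contributes `0`. -/
noncomputable def entrywiseIntegral {E : Type*} [NormedAddCommGroup E] [NormedSpace ℝ E]
    (μ : Measure Ω) (M : Ω → Matrix m n E) : Matrix m n E :=
  of fun i j => ∫ ω, M ω i j ∂μ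

variable {𝕜 : Type*} [RCLike 𝕜] [Fintype m] [Fintype n] {M : Ω → Matrix m n 𝕜}

theorem integrable_mulVec_dotProduct (hM : ∀ i j, Integrable (fun ω => M ω i j) μ)
    (v : n → 𝕜) (w : m → 𝕜) : Integrable (fun ω => M ω *ᵥ v ⬝ᵥ w) μ :=
  integrable_finsetSum _ fun i _ =>
    (integrable_finsetSum _ fun j _ => (hM i j).mul_const (v j)).mul_const (w i)

theorem entrywiseIntegral_mulVec_dotProduct (hM : ∀ i j, Integrable (fun ω => M ω i j) μ)
    (v : n → 𝕜) (w : m → 𝕜) :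
    entrywiseIntegral μ M *ᵥ v ⬝ᵥ w = ∫ ω, M ω *ᵥ v ⬝ᵥ w ∂μ := by
  have hterm (i : m) (j : n) : Integrable (fun ω => M ω i j * v j) μ := (hM i j).mul_const _
  have hrow (i : m) : Integrable (fun ω => ∑ j, M ω i j * v j) μ :=
    integrable_finsetSum _ fun j _ => hterm i j
  simp only [mulVec, dotProduct, entrywiseIntegral, of_apply]
  rw [integral_finsetSum _ fun i _ => (hrow i).mul_const _]
  simp only [integral_mul_const, integral_finsetSum _ fun j _ => hterm _ j]

theorem mul_mul_apply_eq_mulVec_dotProduct {R : Type*} [CommSemiring R] (C : Matrix k m R)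
    (M : Matrix m n R) (D : Matrix n l R) (i : k) (j : l) :
    (C * M * D) i j = M *ᵥ D.col j ⬝ᵥ C.row i := by
  rw [Matrix.mul_assoc, dotProduct_comm]
  rfl

theorem integrable_mul_mul_apply (hM : ∀ i j, Integrable (fun ω => M ω i j) μ)
    (C : Matrix k m 𝕜) (D : Matrix n l 𝕜) (i : k) (j : l) :
    Integrable (fun ω => (C * M ω * D) i j) μ := by
  simpa only [mul_mul_apply_eq_mulVec_dotProduct] using integrable_mulVec_dotProduct hM _ _

theorem mul_entrywiseIntegral_mul (hM : ∀ i j, Integrable (fun ω => M ω i j) μ)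
    (C : Matrix k m 𝕜) (D : Matrix n l 𝕜) :
    C * entrywiseIntegral μ M * D = entrywiseIntegral μ fun ω => C * M ω * D := by
  ext i j
  rw [mul_mul_apply_eq_mulVec_dotProduct, entrywiseIntegral_mulVec_dotProduct hM]
  simp only [entrywiseIntegral, of_apply, mul_mul_apply_eq_mulVec_dotProduct]

end Expectation

section RandomProjection

variable {n Ω : Type*} [Fintype n] [MeasurableSpace Ω] {μ : Measure Ω} {P : Ω → Matrix n n ℝ}

theorem entrywiseIntegral_mulVec_dotProduct_nonneg (hP : ∀ᵐ ω ∂μ, IsStarProjection (P ω))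
    (hint : ∀ i j, Integrable (fun ω => P ω i j) μ) (v : n → ℝ) :
    0 ≤ entrywiseIntegral μ P *ᵥ v ⬝ᵥ v := by
  rw [entrywiseIntegral_mulVec_dotProduct hint]
  refine integral_nonneg_of_ae ?_
  filter_upwards [hP] with ω hω
  exact mulVec_dotProduct_self_nonneg_of_isStarProjection hω v

theorem entrywiseIntegral_mulVec_dotProduct_le [IsProbabilityMeasure μ]
    (hP : ∀ᵐ ω ∂μ, IsStarProjection (P ω)) (hint : ∀ i j, Integrable (fun ω => P ω i j) μ)
    (v : n → ℝ) : entrywiseIntegral μ P *ᵥ v ⬝ᵥ v ≤ v ⬝ᵥ v := by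
  classical
  calc
    entrywiseIntegral μ P *ᵥ v ⬝ᵥ v = ∫ ω, P ω *ᵥ v ⬝ᵥ v ∂μ :=
      entrywiseIntegral_mulVec_dotProduct hint v v
    _ ≤ ∫ _, v ⬝ᵥ v ∂μ := by
      refine integral_mono_ae (integrable_mulVec_dotProduct hint v v) (integrable_const _) ?_
      filter_upwards [hP] with ω hω
      have hcompl := mulVec_dotProduct_self_nonneg_of_isStarProjection hω.one_sub v
      rwa [sub_mulVec, one_mulVec, sub_dotProduct, sub_nonneg] at hcompl
    _ = v ⬝ᵥ v := by simp

theorem mem_Icc_of_isGreatest_rayleighLowerBounds_entrywiseIntegral [IsProbabilityMeasure μ]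
    (hP : ∀ᵐ ω ∂μ, IsStarProjection (P ω)) (hint : ∀ i j, Integrable (fun ω => P ω i j) μ) {t : ℝ}
    (ht : IsGreatest (rayleighLowerBounds (entrywiseIntegral μ P)) t) : t ∈ Set.Icc 0 1 := by
  have := nonempty_of_isGreatest_rayleighLowerBounds ht
  constructor
  · refine ht.2 (mem_rayleighLowerBounds_iff.2 fun v => ?_)
    simpa using entrywiseIntegral_mulVec_dotProduct_nonneg hP hint v
  · refine le_of_mem_rayleighLowerBounds ht.1 fun v => ?_
    simpa using entrywiseIntegral_mulVec_dotProduct_le hP hint v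

end RandomProjection

section Rate

variable {k n m Ω : Type*} [Fintype k] [Fintype n] [Fintype m] [DecidableEq m]
  [MeasurableSpace Ω] {μ : Measure Ω} [IsProbabilityMeasure μ] {A : Matrix n n ℝ}
  {S : Ω → Matrix n m ℝ}

theorem integral_quadraticObjective_sketchStep {L : Matrix k n ℝ} (hL : Lᵀ * L = A)
    (hinv : ∀ᵐ ω ∂μ, IsUnit ((S ω)ᵀ * A * S ω))
    (hint : ∀ i j, Integrable (fun ω => sketchedInverse A (S ω) i j) μ) (xstar x : n → ℝ) :
    ∫ ω, quadraticObjective A xstar (sketchStep A xstar (S ω) x) ∂μ =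
      quadraticObjective A xstar x -
        (1 / 2) * ((L * entrywiseIntegral μ (fun ω => sketchedInverse A (S ω)) * Lᵀ) *ᵥ
          (L *ᵥ (x - xstar)) ⬝ᵥ (L *ᵥ (x - xstar))) := by
  have hproj_int := integrable_mul_mul_apply hint L Lᵀ
  have hstep :=
    hinv.mono fun ω hω => quadraticObjective_sketchStep hL hω xstar x
  rw [integral_congr_ae hstep, integral_sub (integrable_const _)
      ((integrable_mulVec_dotProduct hproj_int _ _).const_mul _), integral_const_mul,
    ← entrywiseIntegral_mulVec_dotProduct hproj_int, mul_entrywiseIntegral_mul hint]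
  simp

theorem integral_quadraticObjective_sketchStep_le {L : Matrix k n ℝ} (hL : Lᵀ * L = A)
    (hinv : ∀ᵐ ω ∂μ, IsUnit ((S ω)ᵀ * A * S ω))
    (hint : ∀ i j, Integrable (fun ω => sketchedInverse A (S ω) i j) μ) {t : ℝ}
    (ht : t ∈ rayleighLowerBounds
      (L * entrywiseIntegral μ (fun ω => sketchedInverse A (S ω)) * Lᵀ)) (xstar x : n → ℝ) :
    ∫ ω, quadraticObjective A xstar (sketchStep A xstar (S ω) x) ∂μ ≤
      (1 - t) * quadraticObjective A xstar x := by
  have hdecrease := mem_rayleighLowerBounds_iff.1 ht (L *ᵥ (x - xstar))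
  rw [← transpose_mul_self_mulVec_dotProduct, hL] at hdecrease
  rw [integral_quadraticObjective_sketchStep hL hinv hint, quadraticObjective]
  linarith

theorem sketch_and_project_linear_rate_general [DecidableEq n] (hA : A.PosSemidef)
    (xstar : n → ℝ) (hinv : ∀ᵐ ω ∂μ, IsUnit ((S ω)ᵀ * A * S ω))
    (hint : ∀ i j, Integrable (fun ω => sketchedInverse A (S ω) i j) μ) {ζ : ℝ}
    (hζ : IsGreatest (rayleighLowerBounds
      (CFC.sqrt A * entrywiseIntegral μ (fun ω => sketchedInverse A (S ω)) * CFC.sqrt A)) ζ) :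
    (0 ≤ ζ ∧ ζ ≤ 1) ∧ ∀ x, ∫ ω, quadraticObjective A xstar (sketchStep A xstar (S ω) x) ∂μ ≤
      (1 - ζ) * quadraticObjective A xstar x := by
  have hsymm : (CFC.sqrt A)ᵀ = CFC.sqrt A := (CFC.sqrt_nonneg A).isSelfAdjoint
  have hsqrt : (CFC.sqrt A)ᵀ * CFC.sqrt A = A := by
    rw [hsymm, CFC.sqrt_mul_sqrt_self A hA.nonneg]
  have hproj : ∀ᵐ ω ∂μ,
      IsStarProjection (CFC.sqrt A * sketchedInverse A (S ω) * (CFC.sqrt A)ᵀ) :=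
    hinv.mono fun ω hω => isStarProjection_mul_sketchedInverse_mul_transpose hsqrt hω
  nth_rw 2 [← hsymm] at hζ
  refine ⟨?_, integral_quadraticObjective_sketchStep_le hsqrt hinv hint hζ.1 xstar⟩
  rw [mul_entrywiseIntegral_mul hint] at hζ
  exact mem_Icc_of_isGreatest_rayleighLowerBounds_entrywiseIntegral hproj
    (integrable_mul_mul_apply hint _ _) hζ

end Rate

/-- Sketch-and-project / SSCN on a quadratic: for
`f(x) = ½(x−x*)ᵀA(x−x*)` with `A ≻ 0` and the exact subspace-minimization step
`x⁺(ω) = x − S(ω)(S(ω)ᵀAS(ω))⁻¹S(ω)ᵀA(x−x*)`, the stochastic condition number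
`ζ = λ_min(A^{1/2} E[S(SᵀAS)⁻¹Sᵀ] A^{1/2})` satisfies `0 ≤ ζ ≤ 1` and
`E[f(x⁺)] ≤ (1 − ζ) f(x)` for every `x`. -/
theorem sketch_and_project_linear_rate
    (d τ : ℕ) (A : Matrix (Fin d) (Fin d) ℝ) (hA : A.PosDef)
    (xstar : Fin d → ℝ) (f : (Fin d → ℝ) → ℝ)
    (hfdef : f = fun x => (1 / 2) * (A.mulVec (x - xstar) ⬝ᵥ (x - xstar)))
    {Ω : Type*} [MeasurableSpace Ω] (μ : MeasureTheory.Measure Ω) [IsProbabilityMeasure μ]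
    (S : Ω → Matrix (Fin d) (Fin τ) ℝ)
    (hmeas : ∀ i j, Measurable fun ω => S ω i j)
    (hinv : ∀ᵐ ω ∂μ, IsUnit ((S ω)ᵀ * A * S ω))
    (hint : ∀ i j, Integrable (fun ω => (S ω * ((S ω)ᵀ * A * S ω)⁻¹ * (S ω)ᵀ) i j) μ)
    (hfint : ∀ x : Fin d → ℝ, Integrable (fun ω =>
      f (x - (S ω).mulVec ((((S ω)ᵀ * A * S ω)⁻¹).mulVec
        ((S ω)ᵀ.mulVec (A.mulVec (x - xstar)))))) μ)
    (ζ : ℝ)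
    (hζ : IsGreatest {t : ℝ | ∀ v : Fin d → ℝ,
      t * ‖toE v‖ ^ 2 ≤
        (CFC.sqrt A *
          (Matrix.of fun i j => ∫ ω, (S ω * ((S ω)ᵀ * A * S ω)⁻¹ * (S ω)ᵀ) i j ∂μ) *
            CFC.sqrt A).mulVec v ⬝ᵥ v} ζ) :
    (0 ≤ ζ ∧ ζ ≤ 1)
    ∧ ∀ x : Fin d → ℝ,
      ∫ ω, f (x - (S ω).mulVec ((((S ω)ᵀ * A * S ω)⁻¹).mulVec
          ((S ω)ᵀ.mulVec (A.mulVec (x - xstar))))) ∂μ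
        ≤ (1 - ζ) * f x := by
  subst hfdef
  exact sketch_and_project_linear_rate_general hA.posSemidef xstar hinv hint hζ
end
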